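/- (Complete local characterisation of metrisability) Let A₀, A₁, A₂, A₃ be real analytic. Then (A₀,A₁,A₂,A₃) is metrisable in a sufficiently small neighbourhood of p ∈ U if and only if the 21×6 matrix M_max, whose rows are V together with all symmetrised iterated derivatives D_{(a₁}⋯D_{a_j)}V for 1 ≤ j ≤ 5, has rank smaller than 6 on a neighbourhood of p, and there exists a real-analytic map W = (W₁,…,W₆) into the kernel of M_max on that neighbourhood with W₁W₃ − W₂² ≠ 0 at p. -/

import Mathlib

/-!
The equations expressing that `(E, F, G)` metrises `(A₀, A₁, A₂, A₃)` become linear (Liouville's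
system) for `(ψ₁, ψ₂, ψ₃) = |Δ|^(-2/3) (E, F, G)`, where `Δ = EG - F²`. Prolonging that system by
the components `2∂ₓψ₂`, `2∂_yψ₂`, `2∂ₓ∂_yψ₂` closes it up: its solutions are the sections `s` of the
trivial bundle of rank six that are parallel for `∇_a = ∂_a + Ω_a`, the connection dual to the
operators `D_a`. The curvature `[∇₁, ∇₂]` sends `s` to `(0, …, 0, V·s)` (`curvature`,
`nab_comm_Om`), so metrisability near `p` amounts to the existence of a parallel section with
`s₁s₃ - s₂² ≠ 0` at `p`.

*From a metric to a kernel field* (`kernel_of_metrisable`). The parallel section attached to a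
metric satisfies `V·s = 0`, and the Leibniz rule `∂_a(R·s) = (D_aR)·s + R·∇_as` shows that all
iterated derivatives of `V` annihilate it; in particular it lies in the kernel of `M_max`. It is
analytic, because along each ray through a point it solves a linear ODE, whose solution depends
analytically on the direction of the ray (`radial_uniqueness`, `analytic_of_parallel`).

*From a kernel field to a metric* (`metrisable_of_kernel`). The kernel field `W` need not be
parallel, but its value at `p` extends to a parallel section.
* On a line through `p` with direction `v`, let `r_n` be the `n`-th covariant derivative of `V`
  along `v`. The rows `r_0, …, r_5` annihilate `W`, which is nonzero, so they are linearly dependent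
  over the domain of analytic germs. The last nonzero coefficient expresses some `r_j`, `j ≤ 5`,
  through `r_0, …, r_{j-1}` off the origin, and differentiation puts every `r_n` in the same span.
  By continuity all `r_n` annihilate `W p` at `p` (`line_kernel`, `rv_all`).
* Let `s` be the analytic field with `s p = W p` that is parallel along the rays through `p`
  (`radial_section`). The derivatives of `V·s` along a ray are the `r_n·s`, which vanish at `p`, so
  `V·s = 0` near `p` by analyticity (`Vrow_radial`).
* Then the curvature annihilates `s`, and each `η = ∇_as` satisfies `η + x∇₁η + y∇₂η = 0` in
  coordinates centred at `p`, which forces `η = 0` (`euler_zero`, `parallel_of_radial`).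
* The first three components of `s` solve Liouville's system, and `δ⁻² (s₁, s₂, s₃)` with
  `δ = s₁s₃ - s₂²` is a metric (`metrisable_of_liouville`).
-/

noncomputable section

open Matrix

/-- Partial derivative in the first (x) variable. -/
def pdx (f : ℝ × ℝ → ℝ) : ℝ × ℝ → ℝ :=
  fun p => deriv (fun t => f (t, p.2)) p.1

/-- Partial derivative in the second (y) variable. -/
def pdy (f : ℝ × ℝ → ℝ) : ℝ × ℝ → ℝ :=
  fun p => deriv (fun t => f (p.1, t)) p.2

/-- `pd 0 = ∂ₓ`, `pd 1 = ∂_y`. -/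
def pd : Fin 2 → (ℝ × ℝ → ℝ) → (ℝ × ℝ → ℝ) := ![pdx, pdy]

/-- The Liouville linear system associated to `(A0, A1, A2, A3)`, holding on `U`. -/
def LiouvilleSystem (U : Set (ℝ × ℝ)) (A0 A1 A2 A3 ψ1 ψ2 ψ3 : ℝ × ℝ → ℝ) : Prop :=
  ∀ p ∈ U,
    pdx ψ1 p = (2/3) * A1 p * ψ1 p - 2 * A0 p * ψ2 p ∧
    pdy ψ3 p = 2 * A3 p * ψ2 p - (2/3) * A2 p * ψ3 p ∧
    pdy ψ1 p + 2 * pdx ψ2 p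
      = (4/3) * A2 p * ψ1 p - (2/3) * A1 p * ψ2 p - 2 * A0 p * ψ3 p ∧
    pdx ψ3 p + 2 * pdy ψ2 p
      = 2 * A3 p * ψ1 p - (4/3) * A1 p * ψ3 p + (2/3) * A2 p * ψ2 p

/-- `(A0, A1, A2, A3)` is metrisable near `p` (within `U`). -/
def MetrisableNear (U : Set (ℝ × ℝ)) (A0 A1 A2 A3 : ℝ × ℝ → ℝ) (p : ℝ × ℝ) : Prop :=
  ∃ V : Set (ℝ × ℝ), IsOpen V ∧ p ∈ V ∧ V ⊆ U ∧
    ∃ E F G : ℝ × ℝ → ℝ,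
      ContDiffOn ℝ (⊤ : ℕ∞) E V ∧ ContDiffOn ℝ (⊤ : ℕ∞) F V ∧ ContDiffOn ℝ (⊤ : ℕ∞) G V ∧
      (∀ q ∈ V, E q * G q - (F q) ^ 2 ≠ 0) ∧
      (∀ q ∈ V,
        A0 q = (E q * pdy E q - 2 * E q * pdx F q + F q * pdx E q)
                 / (2 * (E q * G q - (F q) ^ 2)) ∧
        A1 q = (3 * F q * pdy E q + G q * pdx E q - 2 * F q * pdx F q - 2 * E q * pdx G q)
                 / (2 * (E q * G q - (F q) ^ 2)) ∧
        A2 q = (2 * F q * pdy F q + 2 * G q * pdy E q - 3 * F q * pdx G q - E q * pdy G q)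
                 / (2 * (E q * G q - (F q) ^ 2)) ∧
        A3 q = (2 * G q * pdy F q - G q * pdx G q - F q * pdy G q)
                 / (2 * (E q * G q - (F q) ^ 2)))

end

noncomputable section

/-- Liouville's first projective invariant `L₁`. -/
def Lio1 (A0 A1 A2 A3 : ℝ × ℝ → ℝ) : ℝ × ℝ → ℝ := fun p =>
  (2/3) * pdx (pdy A1) p - (1/3) * pdx (pdx A2) p - pdy (pdy A0) p
    + A0 p * pdy A2 p + A2 p * pdy A0 p - A3 p * pdx A0 p - 2 * A0 p * pdx A3 p
    - (2/3) * A1 p * pdy A1 p + (1/3) * A1 p * pdx A2 p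

/-- Liouville's second projective invariant `L₂`. -/
def Lio2 (A0 A1 A2 A3 : ℝ × ℝ → ℝ) : ℝ × ℝ → ℝ := fun p =>
  (2/3) * pdx (pdy A2) p - (1/3) * pdy (pdy A1) p - pdx (pdx A3) p
    - A3 p * pdx A1 p - A1 p * pdx A3 p + A0 p * pdy A3 p + 2 * A3 p * pdy A0 p
    + (2/3) * A2 p * pdx A2 p - (1/3) * A2 p * pdy A1 p

/-- The row vector `V = (V₁,…,V₆)`. -/
def Vrow (A0 A1 A2 A3 : ℝ × ℝ → ℝ) : ℝ × ℝ → Fin 6 → ℝ := fun p =>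
  ![2 * pdy (Lio2 A0 A1 A2 A3) p + 4 * A2 p * Lio2 A0 A1 A2 A3 p
      + 8 * A3 p * Lio1 A0 A1 A2 A3 p,
    -2 * pdy (Lio1 A0 A1 A2 A3) p - 2 * pdx (Lio2 A0 A1 A2 A3) p
      - (4/3) * A1 p * Lio2 A0 A1 A2 A3 p + (4/3) * A2 p * Lio1 A0 A1 A2 A3 p,
    2 * pdx (Lio1 A0 A1 A2 A3) p - 8 * A0 p * Lio2 A0 A1 A2 A3 p
      - 4 * A1 p * Lio1 A0 A1 A2 A3 p,
    -5 * Lio2 A0 A1 A2 A3 p,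
    -5 * Lio1 A0 A1 A2 A3 p,
    0]

/-- The connection matrix `Ω₁`. -/
def Om1 (A0 A1 A2 A3 : ℝ × ℝ → ℝ) : ℝ × ℝ → Matrix (Fin 6) (Fin 6) ℝ := fun p =>
  Matrix.of
  ![![-(2/3) * A1 p, 2 * A0 p, 0, 0, 0, 0],
    ![0, 0, 0, -(1/2 : ℝ), 0, 0],
    ![-2 * A3 p, -(2/3) * A2 p, (4/3) * A1 p, 0, 1, 0],
    ![-(4/3) * pdx A2 p + 4 * A0 p * A3 p + (2/3) * pdy A1 p,
      -2 * pdy A0 p + (2/3) * pdx A1 p + 4 * A2 p * A0 p - (4/9) * (A1 p) ^ 2,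
      2 * pdx A0 p - 4 * A0 p * A1 p,
      -(1/3) * A1 p, -3 * A0 p, 0],
    ![0, 0, 0, 0, 0, -1],
    ![-(4/3) * pdx (pdy A2) p - (20/3) * A0 p * A2 p * A3 p + (2/3) * pdy (pdy A1) p
        + 4 * A3 p * pdy A0 p - 2 * A0 p * pdy A3 p - (16/9) * A2 p * pdx A2 p
        + (8/9) * A2 p * pdy A1 p,
      (2/3) * pdx (pdy A1) p - (4/3) * A1 p * pdy A1 p + 2 * A0 p * pdy A2 p
        - 2 * pdy (pdy A0) p + 4 * A2 p * pdy A0 p + 4 * A3 p * pdx A0 p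
        + 6 * A0 p * pdx A3 p + (8/9) * A1 p * pdx A2 p
        + (4/3) * A0 p * A1 p * A3 p - (4/3) * A0 p * (A2 p) ^ 2,
      2 * pdx (pdy A0) p + (2/3) * A0 p * pdx A2 p - (4/3) * A2 p * pdx A0 p
        - 4 * A1 p * pdy A0 p - (4/3) * A0 p * pdy A1 p
        + (8/3) * A0 p * A1 p * A2 p + 4 * A3 p * (A0 p) ^ 2,
      (4/3) * pdx A2 p - pdy A1 p + 5 * A0 p * A3 p,
      (1/3) * pdx A1 p - 4 * pdy A0 p + 3 * A2 p * A0 p - (2/9) * (A1 p) ^ 2,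
      -(1/3) * A1 p]]

/-- The connection matrix `Ω₂`. -/
def Om2 (A0 A1 A2 A3 : ℝ × ℝ → ℝ) : ℝ × ℝ → Matrix (Fin 6) (Fin 6) ℝ := fun p =>
  Matrix.of
  ![![-(4/3) * A2 p, (2/3) * A1 p, 2 * A0 p, 1, 0, 0],
    ![0, 0, 0, 0, -(1/2 : ℝ), 0],
    ![0, -2 * A3 p, (2/3) * A2 p, 0, 0, 0],
    ![0, 0, 0, 0, 0, -1],
    ![-2 * pdy A3 p - 4 * A3 p * A2 p,
      2 * pdx A3 p - (2/3) * pdy A2 p + 4 * A1 p * A3 p - (4/9) * (A2 p) ^ 2,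
      (4/3) * pdy A1 p - (2/3) * pdx A2 p + 4 * A0 p * A3 p,
      3 * A3 p, (1/3) * A2 p, 0],
    ![-2 * pdx (pdy A3) p - 4 * A2 p * pdx A3 p - (4/3) * A3 p * pdx A2 p
        + (2/3) * A3 p * pdy A1 p - (4/3) * A1 p * pdy A3 p
        - 4 * A0 p * (A3 p) ^ 2 - (8/3) * A1 p * A2 p * A3 p,
      2 * pdx (pdx A3) p - (4/3) * A2 p * pdx A2 p - (4/3) * A0 p * A2 p * A3 p
        - (2/3) * pdx (pdy A2) p + 4 * A1 p * pdx A3 p + 4 * A0 p * pdy A3 p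
        + 6 * A3 p * pdy A0 p + (4/3) * A3 p * (A1 p) ^ 2 + 2 * A3 p * pdx A1 p
        + (8/9) * A2 p * pdy A1 p,
      -(2/3) * pdx (pdx A2) p + (8/9) * A1 p * pdx A2 p + 4 * A0 p * pdx A3 p
        - 2 * A3 p * pdx A0 p - (16/9) * A1 p * pdy A1 p + (4/3) * pdx (pdy A1) p
        + (20/3) * A0 p * A1 p * A3 p,
      4 * pdx A3 p - (1/3) * pdy A2 p + 3 * A1 p * A3 p - (2/9) * (A2 p) ^ 2,
      pdx A2 p - (4/3) * pdy A1 p + 5 * A0 p * A3 p,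
      (1/3) * A2 p]]

/-- `Ω` indexed by a direction. -/
def Om (A0 A1 A2 A3 : ℝ × ℝ → ℝ) : Fin 2 → ℝ × ℝ → Matrix (Fin 6) (Fin 6) ℝ :=
  ![Om1 A0 A1 A2 A3, Om2 A0 A1 A2 A3]

/-- The operator `D_a W = ∂_a W − W·Ω_a` on row-vector-valued functions. -/
def Dop (A0 A1 A2 A3 : ℝ × ℝ → ℝ) (a : Fin 2) (W : ℝ × ℝ → Fin 6 → ℝ) :
    ℝ × ℝ → Fin 6 → ℝ := fun p =>
  (fun i => pd a (fun q => W q i) p) - Matrix.vecMul (W p) (Om A0 A1 A2 A3 a p)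

/-- Iterated derivative `D_{a₁} ⋯ D_{a_j} W` (the head of the list acts last/outermost). -/
def DIter (A0 A1 A2 A3 : ℝ × ℝ → ℝ) (l : List (Fin 2)) (W : ℝ × ℝ → Fin 6 → ℝ) :
    ℝ × ℝ → Fin 6 → ℝ :=
  l.foldr (Dop A0 A1 A2 A3) W

/-- Symmetrised iterated derivative `D_{(a₁} ⋯ D_{a_j)} V` of the vector `V`. -/
def DSym (A0 A1 A2 A3 : ℝ × ℝ → ℝ) (l : List (Fin 2)) : ℝ × ℝ → Fin 6 → ℝ := fun p =>
  ((l.permutations.length : ℝ))⁻¹ •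
    (l.permutations.map (fun m => DIter A0 A1 A2 A3 m (Vrow A0 A1 A2 A3) p)).sum

/-- The `6 × 6` matrix `M([Γ])` with rows `V, D₁V, D₂V, D₁D₁V, (1/2)(D₁D₂V + D₂D₁V), D₂D₂V`. -/
def Mmat (A0 A1 A2 A3 : ℝ × ℝ → ℝ) : ℝ × ℝ → Matrix (Fin 6) (Fin 6) ℝ := fun p =>
  Matrix.of
  ![Vrow A0 A1 A2 A3 p,
    DIter A0 A1 A2 A3 [0] (Vrow A0 A1 A2 A3) p,
    DIter A0 A1 A2 A3 [1] (Vrow A0 A1 A2 A3) p,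
    DIter A0 A1 A2 A3 [0, 0] (Vrow A0 A1 A2 A3) p,
    (1/2 : ℝ) • (DIter A0 A1 A2 A3 [0, 1] (Vrow A0 A1 A2 A3) p
      + DIter A0 A1 A2 A3 [1, 0] (Vrow A0 A1 A2 A3) p),
    DIter A0 A1 A2 A3 [1, 1] (Vrow A0 A1 A2 A3) p]

end

noncomputable section

/-- The `21 × 6` matrix `M_max` whose rows are `V` together with all symmetrised iterated
derivatives `D_{(a₁}⋯D_{a_j)}V` for `1 ≤ j ≤ 5`; the row `(j, k)` is the symmetrised
derivative of order `j` with `k` indices equal to `2`. -/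
def Mmax (A0 A1 A2 A3 : ℝ × ℝ → ℝ) :
    ℝ × ℝ → Matrix ((j : Fin 6) × Fin (j.1 + 1)) (Fin 6) ℝ := fun p =>
  Matrix.of fun jk i =>
    DSym A0 A1 A2 A3
      (List.replicate (jk.2 : ℕ) (1 : Fin 2) ++
        List.replicate ((jk.1 : ℕ) - (jk.2 : ℕ)) (0 : Fin 2)) p i

end

namespace MetrisableAux

open scoped ContDiff Topology

/-! ### Partial derivatives -/

lemma pdx_eq_fderiv {f : ℝ × ℝ → ℝ} {q : ℝ × ℝ} (h : DifferentiableAt ℝ f q) :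
    pdx f q = fderiv ℝ f q (1, 0) := by
  have h2 : HasDerivAt (fun t : ℝ => (t, q.2)) ((1, 0) : ℝ × ℝ) q.1 :=
    (hasDerivAt_id q.1).prodMk (hasDerivAt_const q.1 q.2)
  exact (HasFDerivAt.comp_hasDerivAt (x := q.1) (f := fun t : ℝ => (t, q.2)) (l := f)
    (l' := fderiv ℝ f q) h.hasFDerivAt h2).deriv

lemma pdy_eq_fderiv {f : ℝ × ℝ → ℝ} {q : ℝ × ℝ} (h : DifferentiableAt ℝ f q) :
    pdy f q = fderiv ℝ f q (0, 1) := by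
  have h2 : HasDerivAt (fun t : ℝ => (q.1, t)) ((0, 1) : ℝ × ℝ) q.2 :=
    (hasDerivAt_const q.2 q.1).prodMk (hasDerivAt_id q.2)
  exact (HasFDerivAt.comp_hasDerivAt (x := q.2) (f := fun t : ℝ => (q.1, t)) (l := f)
    (l' := fderiv ℝ f q) h.hasFDerivAt h2).deriv

section rules
variable {f g : ℝ × ℝ → ℝ} {q : ℝ × ℝ}

lemma pdx_const (c : ℝ) : pdx (fun _ => c) q = 0 := by simp [pdx]
lemma pdy_const (c : ℝ) : pdy (fun _ => c) q = 0 := by simp [pdy]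

lemma pdx_add (hf : DifferentiableAt ℝ f q) (hg : DifferentiableAt ℝ g q) :
    pdx (fun z => f z + g z) q = pdx f q + pdx g q := by
  rw [pdx_eq_fderiv (hf.fun_add hg), pdx_eq_fderiv hf, pdx_eq_fderiv hg, fderiv_fun_add hf hg]
  rfl
lemma pdy_add (hf : DifferentiableAt ℝ f q) (hg : DifferentiableAt ℝ g q) :
    pdy (fun z => f z + g z) q = pdy f q + pdy g q := by
  rw [pdy_eq_fderiv (hf.fun_add hg), pdy_eq_fderiv hf, pdy_eq_fderiv hg, fderiv_fun_add hf hg]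
  rfl
lemma pdx_sub (hf : DifferentiableAt ℝ f q) (hg : DifferentiableAt ℝ g q) :
    pdx (fun z => f z - g z) q = pdx f q - pdx g q := by
  rw [pdx_eq_fderiv (hf.fun_sub hg), pdx_eq_fderiv hf, pdx_eq_fderiv hg, fderiv_fun_sub hf hg]
  rfl
lemma pdy_sub (hf : DifferentiableAt ℝ f q) (hg : DifferentiableAt ℝ g q) :
    pdy (fun z => f z - g z) q = pdy f q - pdy g q := by
  rw [pdy_eq_fderiv (hf.fun_sub hg), pdy_eq_fderiv hf, pdy_eq_fderiv hg, fderiv_fun_sub hf hg]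
  rfl
lemma pdx_neg (hf : DifferentiableAt ℝ f q) : pdx (fun z => -f z) q = -pdx f q := by
  rw [pdx_eq_fderiv hf.fun_neg, pdx_eq_fderiv hf, fderiv_fun_neg]
  rfl
lemma pdy_neg (hf : DifferentiableAt ℝ f q) : pdy (fun z => -f z) q = -pdy f q := by
  rw [pdy_eq_fderiv hf.fun_neg, pdy_eq_fderiv hf, fderiv_fun_neg]
  rfl
lemma pdx_mul (hf : DifferentiableAt ℝ f q) (hg : DifferentiableAt ℝ g q) :
    pdx (fun z => f z * g z) q = pdx f q * g q + f q * pdx g q := by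
  rw [pdx_eq_fderiv (hf.fun_mul hg), pdx_eq_fderiv hf, pdx_eq_fderiv hg, fderiv_fun_mul hf hg]
  simp; ring
lemma pdy_mul (hf : DifferentiableAt ℝ f q) (hg : DifferentiableAt ℝ g q) :
    pdy (fun z => f z * g z) q = pdy f q * g q + f q * pdy g q := by
  rw [pdy_eq_fderiv (hf.fun_mul hg), pdy_eq_fderiv hf, pdy_eq_fderiv hg, fderiv_fun_mul hf hg]
  simp; ring
lemma pdx_sq (hf : DifferentiableAt ℝ f q) :
    pdx (fun z => f z ^ 2) q = 2 * f q * pdx f q := by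
  simp only [pow_two]; rw [pdx_mul hf hf]; ring
lemma pdy_sq (hf : DifferentiableAt ℝ f q) :
    pdy (fun z => f z ^ 2) q = 2 * f q * pdy f q := by
  simp only [pow_two]; rw [pdy_mul hf hf]; ring
lemma pdx_sum {ι : Type*} (s : Finset ι) {F : ι → ℝ × ℝ → ℝ}
    (hF : ∀ i ∈ s, DifferentiableAt ℝ (F i) q) :
    pdx (fun z => ∑ i ∈ s, F i z) q = ∑ i ∈ s, pdx (F i) q := by
  rw [pdx_eq_fderiv (DifferentiableAt.fun_sum hF), fderiv_fun_sum hF,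
    _root_.sum_apply]
  exact Finset.sum_congr rfl fun i hi => (pdx_eq_fderiv (hF i hi)).symm
lemma pdy_sum {ι : Type*} (s : Finset ι) {F : ι → ℝ × ℝ → ℝ}
    (hF : ∀ i ∈ s, DifferentiableAt ℝ (F i) q) :
    pdy (fun z => ∑ i ∈ s, F i z) q = ∑ i ∈ s, pdy (F i) q := by
  rw [pdy_eq_fderiv (DifferentiableAt.fun_sum hF), fderiv_fun_sum hF,
    _root_.sum_apply]
  exact Finset.sum_congr rfl fun i hi => (pdy_eq_fderiv (hF i hi)).symm

lemma pdx_congr (h : f =ᶠ[𝓝 q] g) : pdx f q = pdx g q := by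
  apply Filter.EventuallyEq.deriv_eq
  have : Filter.Tendsto (fun t : ℝ => (t, q.2)) (𝓝 q.1) (𝓝 q) :=
    Continuous.tendsto' (by fun_prop) _ _ rfl
  exact this.eventually h
lemma pdy_congr (h : f =ᶠ[𝓝 q] g) : pdy f q = pdy g q := by
  apply Filter.EventuallyEq.deriv_eq
  have : Filter.Tendsto (fun t : ℝ => (q.1, t)) (𝓝 q.2) (𝓝 q) :=
    Continuous.tendsto' (by fun_prop) _ _ rfl
  exact this.eventually h

lemma eventually_diff (hf : ContDiffAt ℝ ∞ f q) : ∀ᶠ z in 𝓝 q, DifferentiableAt ℝ f z := by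
  have h1 : ContDiffAt ℝ 1 f q := hf.of_le (by exact_mod_cast le_top)
  filter_upwards [h1.eventually (by simp)] with z hz using hz.differentiableAt (by simp)

lemma pdx_eventually (hf : ContDiffAt ℝ ∞ f q) :
    pdx f =ᶠ[𝓝 q] fun z => fderiv ℝ f z (1, 0) := by
  filter_upwards [eventually_diff hf] with z hz using pdx_eq_fderiv hz
lemma pdy_eventually (hf : ContDiffAt ℝ ∞ f q) :
    pdy f =ᶠ[𝓝 q] fun z => fderiv ℝ f z (0, 1) := by
  filter_upwards [eventually_diff hf] with z hz using pdy_eq_fderiv hz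

lemma smooth_pdx (hf : ContDiffAt ℝ ∞ f q) : ContDiffAt ℝ ∞ (pdx f) q :=
  ((hf.fderiv_right (m := ∞) (by simp)).clm_apply contDiffAt_const).congr_of_eventuallyEq
    (pdx_eventually hf)
lemma smooth_pdy (hf : ContDiffAt ℝ ∞ f q) : ContDiffAt ℝ ∞ (pdy f) q :=
  ((hf.fderiv_right (m := ∞) (by simp)).clm_apply contDiffAt_const).congr_of_eventuallyEq
    (pdy_eventually hf)

lemma analytic_pdx (hf : AnalyticAt ℝ f q) : AnalyticAt ℝ (pdx f) q := by
  have h : AnalyticAt ℝ (fun z => fderiv ℝ f z (1, 0)) q :=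
    (ContinuousLinearMap.analyticAt (ContinuousLinearMap.apply ℝ ℝ ((1, 0) : ℝ × ℝ)) _).comp
      hf.fderiv
  exact h.congr (pdx_eventually hf.contDiffAt).symm
lemma analytic_pdy (hf : AnalyticAt ℝ f q) : AnalyticAt ℝ (pdy f) q := by
  have h : AnalyticAt ℝ (fun z => fderiv ℝ f z (0, 1)) q :=
    (ContinuousLinearMap.analyticAt (ContinuousLinearMap.apply ℝ ℝ ((0, 1) : ℝ × ℝ)) _).comp
      hf.fderiv
  exact h.congr (pdy_eventually hf.contDiffAt).symm

lemma pdy_pdx (hf : ContDiffAt ℝ ∞ f q) : pdy (pdx f) q = pdx (pdy f) q := by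
  have hd : DifferentiableAt ℝ (fderiv ℝ f) q :=
    (hf.fderiv_right (m := ∞) (by simp)).differentiableAt (by simp)
  have hs : IsSymmSndFDerivAt ℝ f q :=
    hf.isSymmSndFDerivAt (by simp; exact WithTop.coe_le_coe.2 le_top)
  rw [pdy_congr (pdx_eventually hf), pdx_congr (pdy_eventually hf),
    pdy_eq_fderiv (hd.clm_apply (differentiableAt_const _)),
    pdx_eq_fderiv (hd.clm_apply (differentiableAt_const _)),
    fderiv_clm_apply hd (differentiableAt_const _),
    fderiv_clm_apply hd (differentiableAt_const _)]
  simpa using hs (0, 1) (1, 0)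

lemma eventually_pdy_pdx (hf : AnalyticAt ℝ f q) : pdy (pdx f) =ᶠ[𝓝 q] pdx (pdy f) := by
  filter_upwards [hf.eventually_analyticAt] with z hz using pdy_pdx hz.contDiffAt

end rules

/-! ### The curvature of the connection -/

section curvature
variable {A0 A1 A2 A3 : ℝ × ℝ → ℝ} {q : ℝ × ℝ}

/-- The differentiability facts and commuted third derivatives of an analytic coefficient. -/
lemma jet_facts {A : ℝ × ℝ → ℝ} (h : AnalyticAt ℝ A q) :
    DifferentiableAt ℝ A q ∧ DifferentiableAt ℝ (pdx A) q ∧ DifferentiableAt ℝ (pdy A) q ∧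
    DifferentiableAt ℝ (pdx (pdx A)) q ∧ DifferentiableAt ℝ (pdx (pdy A)) q ∧
    DifferentiableAt ℝ (pdy (pdy A)) q ∧
    pdy (pdx A) q = pdx (pdy A) q ∧ pdy (pdx (pdx A)) q = pdx (pdx (pdy A)) q ∧
    pdy (pdx (pdy A)) q = pdx (pdy (pdy A)) q := by
  refine ⟨h.differentiableAt, (analytic_pdx h).differentiableAt,
    (analytic_pdy h).differentiableAt, (analytic_pdx (analytic_pdx h)).differentiableAt,
    (analytic_pdx (analytic_pdy h)).differentiableAt,
    (analytic_pdy (analytic_pdy h)).differentiableAt, pdy_pdx h.contDiffAt, ?_,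
    pdy_pdx (analytic_pdy h).contDiffAt⟩
  rw [pdy_pdx (analytic_pdx h).contDiffAt, pdx_congr (eventually_pdy_pdx h)]

set_option maxHeartbeats 4000000 in
/-- The curvature `∂ₓΩ₂ - ∂_yΩ₁ + [Ω₁, Ω₂]` of the connection has all rows zero except the
last one, which is `V`. -/
lemma curvature (h0 : AnalyticAt ℝ A0 q) (h1 : AnalyticAt ℝ A1 q)
    (h2 : AnalyticAt ℝ A2 q) (h3 : AnalyticAt ℝ A3 q) (i j : Fin 6) :
    pdx (fun z => Om2 A0 A1 A2 A3 z i j) q - pdy (fun z => Om1 A0 A1 A2 A3 z i j) q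
      + ∑ k, (Om1 A0 A1 A2 A3 q i k * Om2 A0 A1 A2 A3 q k j
        - Om2 A0 A1 A2 A3 q i k * Om1 A0 A1 A2 A3 q k j)
      = if i = 5 then Vrow A0 A1 A2 A3 q j else 0 := by
  obtain ⟨a0, b0, c0, d0, e0, f0, k0, l0, m0⟩ := jet_facts h0
  obtain ⟨a1, b1, c1, d1, e1, f1, k1, l1, m1⟩ := jet_facts h1
  obtain ⟨a2, b2, c2, d2, e2, f2, k2, l2, m2⟩ := jet_facts h2
  obtain ⟨a3, b3, c3, d3, e3, f3, k3, l3, m3⟩ := jet_facts h3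
  clear h0 h1 h2 h3
  fin_cases i <;> fin_cases j <;>
  · simp [Om1, Om2, Vrow, Fin.sum_univ_succ, -one_div]
    try unfold Lio1
    try unfold Lio2
    try simp (disch := fun_prop) only [pdx_add, pdx_sub, pdx_mul, pdx_sq, pdx_neg, pdx_const,
      pdy_add, pdy_sub, pdy_mul, pdy_sq, pdy_neg, pdy_const, k0, m0, k1, m1, k2, l2, m2,
      k3, l3]
    try ring
end curvature

/-! ### The dual connection on column fields -/

section connection
variable {A0 A1 A2 A3 : ℝ × ℝ → ℝ} {q : ℝ × ℝ}

lemma analytic_Om1 (h0 : AnalyticAt ℝ A0 q) (h1 : AnalyticAt ℝ A1 q)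
    (h2 : AnalyticAt ℝ A2 q) (h3 : AnalyticAt ℝ A3 q) (i j : Fin 6) :
    AnalyticAt ℝ (fun z => Om1 A0 A1 A2 A3 z i j) q := by
  have x0 := analytic_pdx h0
  have x1 := analytic_pdx h1
  have x2 := analytic_pdx h2
  have x3 := analytic_pdx h3
  have y0 := analytic_pdy h0
  have y1 := analytic_pdy h1
  have y2 := analytic_pdy h2
  have y3 := analytic_pdy h3
  have xy0 := analytic_pdx y0
  have xy1 := analytic_pdx y1
  have xy2 := analytic_pdx y2
  have yy0 := analytic_pdy y0
  have yy1 := analytic_pdy y1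
  fin_cases i <;> fin_cases j <;> (simp [Om1]; try fun_prop)

lemma analytic_Om2 (h0 : AnalyticAt ℝ A0 q) (h1 : AnalyticAt ℝ A1 q)
    (h2 : AnalyticAt ℝ A2 q) (h3 : AnalyticAt ℝ A3 q) (i j : Fin 6) :
    AnalyticAt ℝ (fun z => Om2 A0 A1 A2 A3 z i j) q := by
  have x0 := analytic_pdx h0
  have x1 := analytic_pdx h1
  have x2 := analytic_pdx h2
  have x3 := analytic_pdx h3
  have y0 := analytic_pdy h0
  have y1 := analytic_pdy h1
  have y2 := analytic_pdy h2
  have y3 := analytic_pdy h3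
  have xx2 := analytic_pdx x2
  have xx3 := analytic_pdx x3
  have xy1 := analytic_pdx y1
  have xy2 := analytic_pdx y2
  have xy3 := analytic_pdx y3
  fin_cases i <;> fin_cases j <;> (simp [Om2]; try fun_prop)

lemma analytic_Lio1 (h0 : AnalyticAt ℝ A0 q) (h1 : AnalyticAt ℝ A1 q)
    (h2 : AnalyticAt ℝ A2 q) (h3 : AnalyticAt ℝ A3 q) :
    AnalyticAt ℝ (Lio1 A0 A1 A2 A3) q := by
  have x0 := analytic_pdx h0
  have x2 := analytic_pdx h2
  have x3 := analytic_pdx h3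
  have y0 := analytic_pdy h0
  have y1 := analytic_pdy h1
  have y2 := analytic_pdy h2
  have xx2 := analytic_pdx x2
  have xy1 := analytic_pdx y1
  have yy0 := analytic_pdy y0
  unfold Lio1
  fun_prop

lemma analytic_Lio2 (h0 : AnalyticAt ℝ A0 q) (h1 : AnalyticAt ℝ A1 q)
    (h2 : AnalyticAt ℝ A2 q) (h3 : AnalyticAt ℝ A3 q) :
    AnalyticAt ℝ (Lio2 A0 A1 A2 A3) q := by
  have x1 := analytic_pdx h1
  have x2 := analytic_pdx h2
  have x3 := analytic_pdx h3
  have y0 := analytic_pdy h0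
  have y1 := analytic_pdy h1
  have y2 := analytic_pdy h2
  have y3 := analytic_pdy h3
  have xx3 := analytic_pdx x3
  have xy2 := analytic_pdx y2
  have yy1 := analytic_pdy y1
  unfold Lio2
  fun_prop

lemma analytic_Vrow (h0 : AnalyticAt ℝ A0 q) (h1 : AnalyticAt ℝ A1 q)
    (h2 : AnalyticAt ℝ A2 q) (h3 : AnalyticAt ℝ A3 q) (i : Fin 6) :
    AnalyticAt ℝ (fun z => Vrow A0 A1 A2 A3 z i) q := by
  have l1 := analytic_Lio1 h0 h1 h2 h3
  have l2 := analytic_Lio2 h0 h1 h2 h3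
  have xl1 := analytic_pdx l1
  have xl2 := analytic_pdx l2
  have yl1 := analytic_pdy l1
  have yl2 := analytic_pdy l2
  fin_cases i <;> (simp [Vrow]; try fun_prop)

/-- The connection on column vectors dual to `Dop`: for `d = ∂_a` and `O = Ω_a`,
`nab d O s = ∂_a s + Ω_a s`. -/
def nab (d : (ℝ × ℝ → ℝ) → ℝ × ℝ → ℝ) (O : ℝ × ℝ → Matrix (Fin 6) (Fin 6) ℝ)
    (s : ℝ × ℝ → Fin 6 → ℝ) : ℝ × ℝ → Fin 6 → ℝ :=
  fun q i => d (fun z => s z i) q + ∑ k, O q i k * s q k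

/-- The commutator of the covariant derivatives is the curvature `∂ₓΩ₂ - ∂_yΩ₁ + [Ω₁, Ω₂]`. -/
lemma nab_comm {O1 O2 : ℝ × ℝ → Matrix (Fin 6) (Fin 6) ℝ} {s : ℝ × ℝ → Fin 6 → ℝ}
    (hO1 : ∀ i j, DifferentiableAt ℝ (fun z => O1 z i j) q)
    (hO2 : ∀ i j, DifferentiableAt ℝ (fun z => O2 z i j) q)
    (hs : ∀ i, ContDiffAt ℝ ∞ (fun z => s z i) q) (i : Fin 6) :
    nab pdx O1 (nab pdy O2 s) q i - nab pdy O2 (nab pdx O1 s) q i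
      = ∑ j, (pdx (fun z => O2 z i j) q - pdy (fun z => O1 z i j) q
          + ∑ k, (O1 q i k * O2 q k j - O2 q i k * O1 q k j)) * s q j := by
  have ds : ∀ i, DifferentiableAt ℝ (fun z => s z i) q :=
    fun i => (hs i).differentiableAt (by simp)
  have dsx : ∀ i, DifferentiableAt ℝ (pdx (fun z => s z i)) q :=
    fun i => (smooth_pdx (hs i)).differentiableAt (by simp)
  have dsy : ∀ i, DifferentiableAt ℝ (pdy (fun z => s z i)) q :=
    fun i => (smooth_pdy (hs i)).differentiableAt (by simp)
  have ex : pdx (fun z => pdy (fun z => s z i) z + ∑ k, O2 z i k * s z k) q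
      = pdx (pdy (fun z => s z i)) q
        + ∑ k, (pdx (fun z => O2 z i k) q * s q k + O2 q i k * pdx (fun z => s z k) q) := by
    rw [pdx_add (dsy i) (DifferentiableAt.fun_sum fun k _ => (hO2 i k).fun_mul (ds k)),
      pdx_sum _ fun k _ => (hO2 i k).fun_mul (ds k)]
    simp only [pdx_mul (hO2 i _) (ds _)]
  have ey : pdy (fun z => pdx (fun z => s z i) z + ∑ k, O1 z i k * s z k) q
      = pdx (pdy (fun z => s z i)) q
        + ∑ k, (pdy (fun z => O1 z i k) q * s q k + O1 q i k * pdy (fun z => s z k) q) := by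
    rw [pdy_add (dsx i) (DifferentiableAt.fun_sum fun k _ => (hO1 i k).fun_mul (ds k)),
      pdy_sum _ fun k _ => (hO1 i k).fun_mul (ds k), pdy_pdx (hs i)]
    simp only [pdy_mul (hO1 i _) (ds _)]
  simp only [nab]
  rw [ex, ey]
  simp only [Fin.sum_univ_six]
  ring

/-- The curvature of the connection sends `s` to `(0, …, 0, V·s)`. -/
lemma nab_comm_Om (h0 : AnalyticAt ℝ A0 q) (h1 : AnalyticAt ℝ A1 q)
    (h2 : AnalyticAt ℝ A2 q) (h3 : AnalyticAt ℝ A3 q) {s : ℝ × ℝ → Fin 6 → ℝ}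
    (hs : ∀ i, ContDiffAt ℝ ∞ (fun z => s z i) q) (i : Fin 6) :
    nab pdx (Om1 A0 A1 A2 A3) (nab pdy (Om2 A0 A1 A2 A3) s) q i
      - nab pdy (Om2 A0 A1 A2 A3) (nab pdx (Om1 A0 A1 A2 A3) s) q i
      = if i = 5 then ∑ j, Vrow A0 A1 A2 A3 q j * s q j else 0 := by
  rw [nab_comm (fun i j => (analytic_Om1 h0 h1 h2 h3 i j).differentiableAt)
    (fun i j => (analytic_Om2 h0 h1 h2 h3 i j).differentiableAt) hs]
  simp only [curvature h0 h1 h2 h3]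
  split_ifs <;> simp

lemma analytic_Om (h0 : AnalyticAt ℝ A0 q) (h1 : AnalyticAt ℝ A1 q)
    (h2 : AnalyticAt ℝ A2 q) (h3 : AnalyticAt ℝ A3 q) (a : Fin 2) (i j : Fin 6) :
    AnalyticAt ℝ (fun z => Om A0 A1 A2 A3 a z i j) q := by
  fin_cases a
  · exact analytic_Om1 h0 h1 h2 h3 i j
  · exact analytic_Om2 h0 h1 h2 h3 i j

lemma analytic_pd {f : ℝ × ℝ → ℝ} (hf : AnalyticAt ℝ f q) (a : Fin 2) :
    AnalyticAt ℝ (pd a f) q := by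
  fin_cases a
  · exact analytic_pdx hf
  · exact analytic_pdy hf

lemma Dop_apply (a : Fin 2) (R : ℝ × ℝ → Fin 6 → ℝ) (q : ℝ × ℝ) (i : Fin 6) :
    Dop A0 A1 A2 A3 a R q i
      = pd a (fun z => R z i) q - ∑ k, R q k * Om A0 A1 A2 A3 a q k i := rfl

lemma analytic_Dop (h0 : AnalyticAt ℝ A0 q) (h1 : AnalyticAt ℝ A1 q)
    (h2 : AnalyticAt ℝ A2 q) (h3 : AnalyticAt ℝ A3 q) {R : ℝ × ℝ → Fin 6 → ℝ}
    (hR : ∀ i, AnalyticAt ℝ (fun z => R z i) q) (a : Fin 2) (i : Fin 6) :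
    AnalyticAt ℝ (fun z => Dop A0 A1 A2 A3 a R z i) q := by
  simp only [Dop_apply]
  exact (analytic_pd (hR i) a).fun_sub (Finset.analyticAt_fun_sum _ fun k _ =>
    (hR k).fun_mul (analytic_Om h0 h1 h2 h3 a k i))

lemma analytic_DIter (h0 : AnalyticAt ℝ A0 q) (h1 : AnalyticAt ℝ A1 q)
    (h2 : AnalyticAt ℝ A2 q) (h3 : AnalyticAt ℝ A3 q) (l : List (Fin 2)) (i : Fin 6) :
    AnalyticAt ℝ (fun z => DIter A0 A1 A2 A3 l (Vrow A0 A1 A2 A3) z i) q := by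
  induction l generalizing i with
  | nil => exact analytic_Vrow h0 h1 h2 h3 i
  | cons a l ih => exact analytic_Dop h0 h1 h2 h3 ih a i

/-- Leibniz rule for the pairing of row and column fields: `∂_a(R·s) = (D_aR)·s + R·∇_as`. -/
lemma pd_pairing {R s : ℝ × ℝ → Fin 6 → ℝ}
    (hR : ∀ i, DifferentiableAt ℝ (fun z => R z i) q)
    (hs : ∀ i, DifferentiableAt ℝ (fun z => s z i) q) (a : Fin 2) :
    pd a (fun z => ∑ i, R z i * s z i) q
      = ∑ i, Dop A0 A1 A2 A3 a R q i * s q i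
        + ∑ i, R q i * nab (pd a) (Om A0 A1 A2 A3 a) s q i := by
  have e : pd a (fun z => ∑ i, R z i * s z i) q
      = ∑ i, (pd a (fun z => R z i) q * s q i + R q i * pd a (fun z => s z i) q) := by
    fin_cases a
    · refine (pdx_sum _ fun k _ => (hR k).fun_mul (hs k)).trans ?_
      exact Finset.sum_congr rfl fun k _ => pdx_mul (hR k) (hs k)
    · refine (pdy_sum _ fun k _ => (hR k).fun_mul (hs k)).trans ?_
      exact Finset.sum_congr rfl fun k _ => pdy_mul (hR k) (hs k)
  rw [e]
  simp only [Dop_apply, nab, Fin.sum_univ_six]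
  ring

/-- All iterated derivatives of `V` annihilate a field that is parallel and killed by `V`. -/
lemma DIter_parallel {U : Set (ℝ × ℝ)} (hU : IsOpen U)
    (h0 : AnalyticOnNhd ℝ A0 U) (h1 : AnalyticOnNhd ℝ A1 U)
    (h2 : AnalyticOnNhd ℝ A2 U) (h3 : AnalyticOnNhd ℝ A3 U) {s : ℝ × ℝ → Fin 6 → ℝ}
    (hs : ∀ q ∈ U, ∀ i, DifferentiableAt ℝ (fun z => s z i) q)
    (hpar : ∀ q ∈ U, ∀ a i, nab (pd a) (Om A0 A1 A2 A3 a) s q i = 0)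
    (hV : ∀ q ∈ U, ∑ i, Vrow A0 A1 A2 A3 q i * s q i = 0) (l : List (Fin 2)) :
    ∀ q ∈ U, ∑ i, DIter A0 A1 A2 A3 l (Vrow A0 A1 A2 A3) q i * s q i = 0 := by
  induction l with
  | nil => exact hV
  | cons a l ih =>
    intro q hq
    have hp := pd_pairing (A0 := A0) (A1 := A1) (A2 := A2) (A3 := A3) (a := a)
      (fun i => (analytic_DIter (h0 q hq) (h1 q hq) (h2 q hq) (h3 q hq) l i).differentiableAt)
      (hs q hq)
    have hz : (fun z => ∑ i, DIter A0 A1 A2 A3 l (Vrow A0 A1 A2 A3) z i * s z i)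
        =ᶠ[𝓝 q] fun _ => 0 := by
      filter_upwards [hU.mem_nhds hq] with z hz using ih z hz
    have hd : pd a (fun z => ∑ i, DIter A0 A1 A2 A3 l (Vrow A0 A1 A2 A3) z i * s z i) q = 0 := by
      fin_cases a
      · exact (pdx_congr hz).trans (pdx_const 0)
      · exact (pdy_congr hz).trans (pdy_const 0)
    rw [hd] at hp
    simp only [hpar q hq, mul_zero, Finset.sum_const_zero, add_zero] at hp
    exact hp.symm

end connection

/-! ### Linear equations along rays: spaces of curves -/

section radial

open scoped unitInterval

variable {E F G : Type*} [NormedAddCommGroup E] [NormedSpace ℝ E]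
  [NormedAddCommGroup F] [NormedSpace ℝ F] [NormedAddCommGroup G] [NormedSpace ℝ G]

/-- The bounded operator sending `g` to the curve `τ ↦ τ ^ k • g` on the unit interval. -/
noncomputable def mkPow (G : Type*) [NormedAddCommGroup G] [NormedSpace ℝ G] (k : ℕ) :
    G →L[ℝ] C(I, G) :=
  LinearMap.mkContinuous
    { toFun := fun g => ⟨fun τ => (τ : ℝ) ^ k • g, by fun_prop⟩
      map_add' := fun a b => by ext τ; simp
      map_smul' := fun c a => by ext τ; simp [smul_comm c] } 1 fun g => by
    rw [ContinuousMap.norm_le _ (by positivity)]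
    intro τ
    change ‖(τ : ℝ) ^ k • g‖ ≤ 1 * ‖g‖
    rw [norm_smul, norm_pow, Real.norm_of_nonneg τ.2.1]
    gcongr
    exact pow_le_one₀ τ.2.1 τ.2.2

lemma mkPow_apply (k : ℕ) (g : G) (τ : I) : mkPow G k g τ = (τ : ℝ) ^ k • g := rfl

lemma norm_mkPow_le (k : ℕ) : ‖mkPow G k‖ ≤ 1 := LinearMap.mkContinuous_norm_le _ zero_le_one _

/-- The rescaled curves `τ ↦ f (τ • v)` of an analytic map depend analytically on `v`. -/
lemma exists_analytic_rays [CompleteSpace G] {f : E → G} (hf : AnalyticAt ℝ f 0) :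
    ∃ Φ : E → C(I, G), AnalyticAt ℝ Φ 0 ∧ ∀ᶠ v in 𝓝 0, ∀ τ : I, Φ v τ = f ((τ : ℝ) • v) := by
  obtain ⟨p, r, hp⟩ := hf
  let P : FormalMultilinearSeries ℝ E C(I, G) :=
    fun k => (mkPow G k).compContinuousMultilinearMap (p k)
  have hle : ∀ k, ‖P k‖ ≤ ‖p k‖ := fun k => by
    refine (ContinuousLinearMap.norm_compContinuousMultilinearMap_le _ _).trans ?_
    exact mul_le_of_le_one_left (norm_nonneg _) (norm_mkPow_le k)
  have hrad : p.radius ≤ P.radius := FormalMultilinearSeries.radius_le_of_le hle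
  have hpos : 0 < P.radius := (hp.r_pos.trans_le hp.r_le).trans_le hrad
  have hP := P.hasFPowerSeriesOnBall hpos
  refine ⟨P.sum, hP.analyticAt, ?_⟩
  filter_upwards [Metric.eball_mem_nhds (0 : E) hp.r_pos] with v hv τ
  have h1 : HasSum (fun n => P n fun _ => v) (P.sum v) := by
    have := hP.hasSum (y := v) (Metric.eball_subset_eball (hp.r_le.trans hrad) hv)
    simpa using this
  have hτ : (τ : ℝ) • v ∈ Metric.eball (0 : E) r := by
    simp only [Metric.mem_eball, edist_zero_right] at hv ⊢
    refine lt_of_le_of_lt ?_ hv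
    rw [← ofReal_norm, ← ofReal_norm]
    apply ENNReal.ofReal_le_ofReal
    rw [norm_smul, Real.norm_of_nonneg τ.2.1]
    exact mul_le_of_le_one_left (norm_nonneg _) τ.2.2
  have h2 : HasSum (fun n => p n fun _ => (τ : ℝ) • v) (f ((τ : ℝ) • v)) := by
    simpa using hp.hasSum hτ
  have h3 := (ContinuousMap.evalCLM ℝ τ).hasSum h1
  refine h3.unique ?_
  convert h2 using 2 with n
  change (τ : ℝ) ^ n • p n (fun _ => v) = _
  rw [(p n).map_smul_univ (fun _ => (τ : ℝ)) (fun _ => v)]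
  simp

/-- Pointwise application of operator-valued curves to vector-valued curves. -/
noncomputable def pwApply (G F : Type*) [NormedAddCommGroup G] [NormedSpace ℝ G]
    [NormedAddCommGroup F] [NormedSpace ℝ F] :
    C(I, G →L[ℝ] F) →L[ℝ] C(I, G) →L[ℝ] C(I, F) :=
  LinearMap.mkContinuous₂
    (LinearMap.mk₂ ℝ (fun (a : C(I, G →L[ℝ] F)) (x : C(I, G)) => (⟨fun τ => a τ (x τ), by fun_prop⟩ : C(I, F)))
      (fun a b x => by ext; simp) (fun c a x => by ext; simp)
      (fun a x y => by ext; simp) (fun c a x => by ext; simp)) 1 fun a x => by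
    rw [ContinuousMap.norm_le _ (by positivity)]
    intro τ
    rw [one_mul]
    exact ((a τ).le_opNorm _).trans (mul_le_mul (a.norm_coe_le_norm τ) (x.norm_coe_le_norm τ)
      (norm_nonneg _) ((norm_nonneg _).trans (a.norm_coe_le_norm τ)))

lemma pwApply_apply (a : C(I, G →L[ℝ] F)) (x : C(I, G)) (τ : I) :
    pwApply G F a x τ = a τ (x τ) := rfl

/-- Integration `(Jx)(t) = ∫₀ᵗ x` as a bounded operator on curves. -/
noncomputable def integOp (F : Type*) [NormedAddCommGroup F] [NormedSpace ℝ F] :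
    C(I, F) →L[ℝ] C(I, F) :=
  LinearMap.mkContinuous
    { toFun := fun x => ⟨fun t => ∫ τ in (0 : ℝ)..t, x (Set.projIcc 0 1 zero_le_one τ), by
        have hc : Continuous fun τ : ℝ => x (Set.projIcc 0 1 zero_le_one τ) :=
          x.continuous.comp continuous_projIcc
        exact (intervalIntegral.continuous_primitive
          (fun a b => hc.intervalIntegrable a b) 0).comp continuous_subtype_val⟩
      map_add' := fun x y => by
        ext t
        exact intervalIntegral.integral_add
          ((x.continuous.comp continuous_projIcc).intervalIntegrable _ _)
          ((y.continuous.comp continuous_projIcc).intervalIntegrable _ _)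
      map_smul' := fun c x => by
        ext t
        exact intervalIntegral.integral_smul c _ } 1 fun x => by
    rw [ContinuousMap.norm_le _ (by positivity)]
    intro t
    have h := intervalIntegral.norm_integral_le_of_norm_le_const (a := (0 : ℝ)) (b := t)
      (f := fun τ => x (Set.projIcc 0 1 zero_le_one τ)) (C := ‖x‖)
      fun τ _ => x.norm_coe_le_norm _
    refine h.trans ?_
    rw [sub_zero, abs_of_nonneg t.2.1, one_mul]
    exact mul_le_of_le_one_right (norm_nonneg _) t.2.2

lemma integOp_apply (x : C(I, F)) (t : I) :
    integOp F x t = ∫ τ in (0 : ℝ)..t, x (Set.projIcc 0 1 zero_le_one τ) := rfl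

end radial

/-! ### Linear equations along rays: analytic dependence -/

section radial

open scoped unitInterval

variable {E F G : Type*} [NormedAddCommGroup E] [NormedSpace ℝ E]
  [NormedAddCommGroup F] [NormedSpace ℝ F] [NormedAddCommGroup G] [NormedSpace ℝ G]

/-- Solutions of `(1 - K v) y = u` depend analytically on `v` near a zero of the analytic
operator-valued map `K`. -/
lemma exists_analytic_resolvent {X : Type*} [NormedAddCommGroup X] [NormedSpace ℝ X]
    [CompleteSpace X] {K : E → X →L[ℝ] X} (hK : AnalyticAt ℝ K 0) (hK0 : K 0 = 0) (u : X) :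
    ∃ x : E → X, AnalyticAt ℝ x 0 ∧ ∀ᶠ v in 𝓝 0, ∀ y, y - K v y = u ↔ y = x v := by
  have hinv : AnalyticAt ℝ (fun v => Ring.inverse (1 - K v)) 0 := by
    have h := analyticAt_inverse_one_sub ℝ (X →L[ℝ] X)
    rw [← hK0] at h
    exact h.comp hK
  refine ⟨fun v => Ring.inverse (1 - K v) u,
    ((ContinuousLinearMap.apply ℝ X u).analyticAt _).comp hinv, ?_⟩
  have hunit : ∀ᶠ v in 𝓝 (0 : E), IsUnit (1 - K v) := by
    have hc : ContinuousAt (fun v => 1 - K v) 0 := continuousAt_const.sub hK.continuousAt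
    exact hc.eventually_mem (s := {a | IsUnit a}) (Units.isOpen.mem_nhds (by simp [hK0]))
  filter_upwards [hunit] with v hu y
  constructor
  · intro h
    have h' : (1 - K v) y = u := h
    rw [← h', ← mul_apply_eq_comp, Ring.inverse_mul_cancel _ hu]; rfl
  · rintro rfl
    change (1 - K v) (Ring.inverse (1 - K v) u) = u
    rw [← mul_apply_eq_comp, Ring.mul_inverse_cancel _ hu]; rfl

lemma analyticAt_comp_bilin {X Z : Type*} [NormedAddCommGroup X] [NormedSpace ℝ X]
    [NormedAddCommGroup Z] [NormedSpace ℝ Z] (J : X →L[ℝ] X) (T : Z →L[ℝ] X →L[ℝ] X)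
    {a : E → Z} (ha : AnalyticAt ℝ a 0) : AnalyticAt ℝ (fun v => J.comp (T (a v))) 0 :=
  ((ContinuousLinearMap.compL ℝ X X X J).analyticAt _).comp ((T.analyticAt _).comp ha)

lemma analyticAt_clm_comp {X Z : Type*} [NormedAddCommGroup X] [NormedSpace ℝ X]
    [NormedAddCommGroup Z] [NormedSpace ℝ Z] (T : X →L[ℝ] Z)
    {x : E → X} (hx : AnalyticAt ℝ x 0) : AnalyticAt ℝ (fun v => T (x v)) 0 :=
  (T.analyticAt _).comp hx

set_option maxHeartbeats 2000000 in
/-- Linear ODEs along the rays through the origin, `y' = A(t v) v y` with `y(0) = w`: when `A` is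
analytic, the value at time one is an analytic function of `v`. The integral equation is
`(1 - K_v) y = w` with `K_v` a small bounded operator on curves depending analytically on `v`. -/
lemma radial_uniqueness [CompleteSpace F] {A : E → E →L[ℝ] F →L[ℝ] F} (hA : AnalyticAt ℝ A 0)
    (w : F) :
    ∃ s : E → F, AnalyticAt ℝ s 0 ∧ ∀ᶠ v in 𝓝 (0 : E),
      (∀ y : ℝ → F, y 0 = w →
        (∀ t ∈ Set.Icc (0 : ℝ) 1, HasDerivAt y (A (t • v) v (y t)) t) → y 1 = s v) ∧
      (∃ y : ℝ → F, y 0 = w ∧ ∀ t ∈ Set.Icc (0 : ℝ) 1, HasDerivAt y (A (t • v) v (y t)) t) := by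
  obtain ⟨Φ, hΦ, hΦe⟩ := exists_analytic_rays hA
  obtain ⟨a, ha, hav⟩ : ∃ a : E → C(I, F →L[ℝ] F), AnalyticAt ℝ a 0 ∧
      ∀ v τ, a v τ = Φ v τ v :=
    ⟨fun v => pwApply E (F →L[ℝ] F) (Φ v) (mkPow E 0 v),
      ((pwApply E (F →L[ℝ] F)).analyticAt_bilinear (_, _)).comp₂ hΦ ((mkPow E 0).analyticAt 0),
      fun v τ => by simp [pwApply_apply, mkPow_apply]⟩
  obtain ⟨K, hK, hKv⟩ : ∃ K : E → C(I, F) →L[ℝ] C(I, F), AnalyticAt ℝ K 0 ∧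
      ∀ v, K v = (integOp F).comp (pwApply F F (a v)) :=
    ⟨fun v => (integOp F).comp (pwApply F F (a v)),
      analyticAt_comp_bilin (X := C(I, F)) (Z := C(I, F →L[ℝ] F)) (integOp F) (pwApply F F) ha,
      fun v => rfl⟩
  have hK0 : K 0 = 0 := by
    have h0 : a 0 = 0 := by ext1 τ; simp [hav]
    rw [hKv, h0, map_zero, ContinuousLinearMap.comp_zero]
  obtain ⟨x, hx, hxe⟩ := exists_analytic_resolvent hK hK0 (mkPow F 0 w)
  refine ⟨fun v => x v 1,
    analyticAt_clm_comp (X := C(I, F)) (ContinuousMap.evalCLM ℝ (1 : I)) hx, ?_⟩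
  filter_upwards [hxe, hΦe] with v hxv hΦv
  have hav' : ∀ τ : I, a v τ = A ((τ : ℝ) • v) v := fun τ => by rw [hav, hΦv]
  have hcont : ∀ z : C(I, F),
      Continuous fun τ : ℝ => pwApply F F (a v) z (Set.projIcc 0 1 zero_le_one τ) :=
    fun z => (pwApply F F (a v) z).continuous.comp continuous_projIcc
  have hKt : ∀ (z : C(I, F)) (t : I), K v z t
      = ∫ τ in (0 : ℝ)..t, pwApply F F (a v) z (Set.projIcc 0 1 zero_le_one τ) := by
    intro z t
    rw [hKv]; rfl
  constructor
  · intro y hy0 hy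
    have hyc : ContinuousOn y (Set.Icc 0 1) := fun t ht => (hy t ht).continuousAt.continuousWithinAt
    obtain ⟨Y, hYt⟩ : ∃ Y : C(I, F), ∀ t : I, Y t = y t :=
      ⟨⟨fun t => y t, continuousOn_iff_continuous_domRestrict.1 hyc⟩, fun _ => rfl⟩
    have hY : Y - K v Y = mkPow F 0 w := by
      ext1 t
      have hK' : K v Y t = y t - y 0 := by
        rw [hKt]
        refine intervalIntegral.integral_eq_sub_of_hasDerivAt (fun τ hτ => ?_)
          ((hcont Y).intervalIntegrable _ _)
        rw [Set.uIcc_of_le t.2.1] at hτ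
        have hτ' : τ ∈ Set.Icc (0 : ℝ) 1 := ⟨hτ.1, hτ.2.trans t.2.2⟩
        rw [Set.projIcc_of_mem zero_le_one hτ', pwApply_apply, hav', hYt]
        exact hy τ hτ'
      rw [ContinuousMap.sub_apply, hK', hy0, hYt, mkPow_apply, pow_zero, one_smul]
      abel
    rw [← (hxv Y).1 hY, hYt]; rfl
  · have hxt : ∀ t (ht : t ∈ Set.Icc (0 : ℝ) 1), w + (∫ τ in (0 : ℝ)..t,
        pwApply F F (a v) (x v) (Set.projIcc 0 1 zero_le_one τ)) = x v ⟨t, ht⟩ := by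
      intro t ht
      have h := congrArg (fun z : C(I, F) => z ⟨t, ht⟩) ((hxv _).2 rfl)
      simp only [ContinuousMap.sub_apply, hKt, mkPow_apply, pow_zero, one_smul] at h
      rw [← h]; abel
    refine ⟨fun t => w + ∫ τ in (0 : ℝ)..t,
        pwApply F F (a v) (x v) (Set.projIcc 0 1 zero_le_one τ), by simp, fun t ht => ?_⟩
    simp only [hxt t ht]
    have h := ((hcont (x v)).integral_hasStrictDerivAt 0 t).hasDerivAt.const_add w
    rw [Set.projIcc_of_mem zero_le_one ht, pwApply_apply, hav'] at h
    exact h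

/-- The value at time one of the solutions of `y' = A(t v) v y`, `y(0) = w`, is an analytic map `s`
with `ds(v) v = A(v) v s(v)`: by rescaling time, `t ↦ s(t v)` is itself a solution. -/
lemma radial_ode [CompleteSpace F] {A : E → E →L[ℝ] F →L[ℝ] F} (hA : AnalyticAt ℝ A 0)
    (w : F) :
    ∃ s : E → F, AnalyticAt ℝ s 0 ∧ s 0 = w ∧
      (∀ᶠ v in 𝓝 (0 : E), ∀ y : ℝ → F, y 0 = w →
        (∀ t ∈ Set.Icc (0 : ℝ) 1, HasDerivAt y (A (t • v) v (y t)) t) → y 1 = s v) ∧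
      (∀ᶠ v in 𝓝 (0 : E), fderiv ℝ s v v = A v v (s v)) := by
  obtain ⟨s, hs, h⟩ := radial_uniqueness hA w
  refine ⟨s, hs, ?_, h.mono fun v hv => hv.1, ?_⟩
  · refine (h.self_of_nhds.1 (fun _ => w) rfl fun t _ => ?_).symm
    simpa using hasDerivAt_const t w
  obtain ⟨ε, hε, hball⟩ := Metric.eventually_nhds_iff_ball.1 (h.and hs.eventually_analyticAt)
  filter_upwards [Metric.ball_mem_nhds (0 : E) (half_pos hε)] with v hv
  rw [mem_ball_zero_iff] at hv
  have h2 : (2 : ℝ) • v ∈ Metric.ball (0 : E) ε := by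
    rw [mem_ball_zero_iff, norm_smul, Real.norm_two]; linarith
  obtain ⟨y, hy0, hy⟩ := (hball _ h2).1.2
  have hys : ∀ t ∈ Set.Icc (0 : ℝ) 1, y t = s (t • (2 : ℝ) • v) := by
    intro t ht
    have hb : t • (2 : ℝ) • v ∈ Metric.ball (0 : E) ε := by
      rw [mem_ball_zero_iff] at h2 ⊢
      rw [norm_smul, Real.norm_of_nonneg ht.1]
      exact (mul_le_of_le_one_left (norm_nonneg _) ht.2).trans_lt h2
    have := (hball _ hb).1.1 (fun τ => y (τ * t)) (by simpa using hy0) fun τ hτ => by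
      have hm : τ * t ∈ Set.Icc (0 : ℝ) 1 :=
        ⟨mul_nonneg hτ.1 ht.1, mul_le_one₀ hτ.2 ht.1 ht.2⟩
      have hd : HasDerivAt (fun τ => y (τ * t)) _ τ :=
        (hy _ hm).scomp τ (h := fun τ => τ * t) ((hasDerivAt_id τ).mul_const t)
      rw [one_mul, mul_smul] at hd
      rw [map_smul (A (τ • t • (2 : ℝ) • v)) t]
      exact hd
    simpa using this
  have hd1 : HasDerivAt y (A ((1 / 2 : ℝ) • (2 : ℝ) • v) ((2 : ℝ) • v) (y (1 / 2))) (1 / 2) :=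
    hy _ ⟨by norm_num, by norm_num⟩
  have hsv : DifferentiableAt ℝ s v :=
    (hball v (by rw [mem_ball_zero_iff]; linarith)).2.differentiableAt
  have hv2 : (1 / 2 : ℝ) • (2 : ℝ) • v = v := by rw [smul_smul]; norm_num
  have hd2 : HasDerivAt (fun t : ℝ => s (t • (2 : ℝ) • v)) (fderiv ℝ s v ((2 : ℝ) • v)) (1 / 2) := by
    have h3 : HasDerivAt (fun t : ℝ => t • (2 : ℝ) • v) ((2 : ℝ) • v) (1 / 2) := by
      simpa using (hasDerivAt_id (1 / 2 : ℝ)).smul_const ((2 : ℝ) • v)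
    refine HasFDerivAt.comp_hasDerivAt (l := s) (1 / 2 : ℝ) ?_ h3
    rw [hv2]; exact hsv.hasFDerivAt
  have hd3 : HasDerivAt y (fderiv ℝ s v ((2 : ℝ) • v)) (1 / 2) := by
    refine hd2.congr_of_eventuallyEq ?_
    filter_upwards [Icc_mem_nhds (a := (0 : ℝ)) (b := 1) (x := 1 / 2) (by norm_num) (by norm_num)]
      with t ht using hys t ht
  have he := hd3.unique hd1
  rw [hys _ ⟨by norm_num, by norm_num⟩, hv2, map_smul, map_smul,
    smul_apply] at he
  exact smul_right_injective F (two_ne_zero (α := ℝ)) he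

end radial

/-! ### Covariant derivatives along a line -/

section line

/-- The ring of germs at `0` of real-analytic functions of one variable. -/
def analyticGerms : Subring (Filter.Germ (𝓝 (0 : ℝ)) ℝ) where
  carrier := {g | ∃ f : ℝ → ℝ, AnalyticAt ℝ f 0 ∧ (f : Filter.Germ (𝓝 (0 : ℝ)) ℝ) = g}
  mul_mem' := by
    rintro _ _ ⟨f, hf, rfl⟩ ⟨g, hg, rfl⟩
    exact ⟨f * g, hf.mul hg, rfl⟩
  one_mem' := ⟨fun _ => 1, analyticAt_const, rfl⟩
  add_mem' := by
    rintro _ _ ⟨f, hf, rfl⟩ ⟨g, hg, rfl⟩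
    exact ⟨f + g, hf.add hg, rfl⟩
  zero_mem' := ⟨fun _ => 0, analyticAt_const, rfl⟩
  neg_mem' := by
    rintro _ ⟨f, hf, rfl⟩
    exact ⟨-f, hf.neg, rfl⟩

/-- The germ of an analytic function. -/
def toGerm (f : ℝ → ℝ) (hf : AnalyticAt ℝ f 0) : analyticGerms :=
  ⟨(f : Filter.Germ (𝓝 (0 : ℝ)) ℝ), f, hf, rfl⟩

lemma exists_toGerm (a : analyticGerms) : ∃ f hf, a = toGerm f hf := by
  obtain ⟨_, f, hf, rfl⟩ := a
  exact ⟨f, hf, rfl⟩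

lemma toGerm_eq_zero {f : ℝ → ℝ} {hf : AnalyticAt ℝ f 0} :
    toGerm f hf = 0 ↔ ∀ᶠ t in 𝓝 0, f t = 0 := by
  rw [← Subtype.coe_inj]
  change (f : Filter.Germ (𝓝 (0 : ℝ)) ℝ) = ((0 : ℝ → ℝ) : Filter.Germ (𝓝 (0 : ℝ)) ℝ) ↔ _
  rw [Filter.Germ.coe_eq]
  rfl

lemma toGerm_mul {f g : ℝ → ℝ} (hf : AnalyticAt ℝ f 0) (hg : AnalyticAt ℝ g 0) :
    toGerm f hf * toGerm g hg = toGerm (f * g) (hf.mul hg) := rfl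

lemma toGerm_sum {f : Fin 6 → ℝ → ℝ} (hf : ∀ i, AnalyticAt ℝ (f i) 0) :
    ∑ i, toGerm (f i) (hf i)
      = toGerm (fun t => ∑ i, f i t) (Finset.analyticAt_fun_sum _ fun i _ => hf i) := by
  simp only [Fin.sum_univ_six]
  rfl

instance : IsDomain analyticGerms := by
  have : Nontrivial analyticGerms := by
    refine ⟨toGerm (fun _ => 1) analyticAt_const, 0, fun h => ?_⟩
    simpa using (toGerm_eq_zero.1 h).self_of_nhds
  have : NoZeroDivisors analyticGerms := by
    refine ⟨fun {a b} hab => ?_⟩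
    obtain ⟨f, hf, rfl⟩ := exists_toGerm a
    obtain ⟨g, hg, rfl⟩ := exists_toGerm b
    rw [toGerm_mul, toGerm_eq_zero] at hab
    rw [toGerm_eq_zero, toGerm_eq_zero]
    by_contra hcon
    rw [not_or] at hcon
    have hf' := hf.eventually_eq_zero_or_eventually_ne_zero.resolve_left hcon.1
    have hg' := hg.eventually_eq_zero_or_eventually_ne_zero.resolve_left hcon.2
    obtain ⟨t, h1, h2, h3⟩ := (hf'.and (hg'.and (hab.filter_mono nhdsWithin_le_nhds))).exists
    exact mul_ne_zero h1 h2 h3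
  exact NoZeroDivisors.to_isDomain _

/-- Six analytic row fields with a common nonzero kernel vector satisfy a nontrivial analytic
linear relation. -/
lemma exists_relation {r : Fin 6 → ℝ → Fin 6 → ℝ} {w : ℝ → Fin 6 → ℝ}
    (hr : ∀ n i, AnalyticAt ℝ (fun t => r n t i) 0) (hw : ∀ i, AnalyticAt ℝ (fun t => w t i) 0)
    (hw0 : w 0 ≠ 0) (hker : ∀ n, ∀ᶠ t in 𝓝 0, ∑ i, r n t i * w t i = 0) :
    ∃ c : Fin 6 → ℝ → ℝ, (∀ n, AnalyticAt ℝ (c n) 0) ∧ (∃ n, ¬ ∀ᶠ t in 𝓝 0, c n t = 0) ∧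
      ∀ i, ∀ᶠ t in 𝓝 0, ∑ n, c n t * r n t i = 0 := by
  let M : Matrix (Fin 6) (Fin 6) analyticGerms := fun n i => toGerm _ (hr n i)
  let x : Fin 6 → analyticGerms := fun i => toGerm _ (hw i)
  have hx : x ≠ 0 := by
    intro h
    apply hw0
    funext i
    exact (toGerm_eq_zero.1 (congrFun h i)).self_of_nhds
  have hMx : M.mulVec x = 0 := by
    funext n
    change ∑ i, toGerm _ (hr n i) * toGerm _ (hw i) = 0
    simp only [toGerm_mul]
    rw [toGerm_sum, toGerm_eq_zero]
    exact hker n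
  have hdet := Matrix.exists_mulVec_eq_zero_iff.1 ⟨x, hx, hMx⟩
  obtain ⟨c, hc, hcM⟩ := Matrix.exists_vecMul_eq_zero_iff.2 hdet
  choose f hf hcf using fun n => exists_toGerm (c n)
  refine ⟨f, hf, ?_, fun i => ?_⟩
  · by_contra! hcon
    apply hc
    funext n
    rw [hcf]
    exact toGerm_eq_zero.2 (hcon n)
  · have h := congrFun hcM i
    change ∑ n, c n * toGerm _ (hr n i) = 0 at h
    simp only [hcf, toGerm_mul] at h
    rw [toGerm_sum, toGerm_eq_zero] at h
    exact h

/-- Let `r₀, r₁, …` be successive covariant derivatives of a row field along a line. If the first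
six annihilate an analytic field `w` with `w(0) ≠ 0`, then all of them do, at `0`: by a relation
`r_j = ∑_{i<j} e_i r_i` off the origin, every `r_n` lies in the span of `r_0, …, r_{j-1}`. -/
lemma line_kernel {T : Set ℝ} (hT : IsOpen T) (h0T : (0 : ℝ) ∈ T) {r : ℕ → ℝ → Fin 6 → ℝ}
    {O : ℝ → Fin 6 → Fin 6 → ℝ} {w : ℝ → Fin 6 → ℝ}
    (hr : ∀ n i, AnalyticOnNhd ℝ (fun t => r n t i) T)
    (hrec : ∀ n i, ∀ t ∈ T, r (n + 1) t i
      = deriv (fun τ => r n τ i) t - ∑ k, r n t k * O t k i)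
    (hw : ∀ i, AnalyticOnNhd ℝ (fun t => w t i) T) (hw0 : w 0 ≠ 0)
    (hker : ∀ n < 6, ∀ t ∈ T, ∑ i, r n t i * w t i = 0) (n : ℕ) :
    ∑ i, r n 0 i * w 0 i = 0 := by
  obtain ⟨c, hc, ⟨n₀, hn₀⟩, hrel⟩ := exists_relation (r := fun n => r n)
    (fun n i => hr n i 0 h0T) (fun i => hw i 0 h0T) hw0 fun n => by
      filter_upwards [hT.mem_nhds h0T] with t ht using hker n n.2 t ht
  -- the largest index with a nonzero coefficient
  obtain ⟨j, hj, hjmax⟩ : ∃ j : Fin 6, (¬ ∀ᶠ t in 𝓝 0, c j t = 0) ∧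
      ∀ k, j < k → ∀ᶠ t in 𝓝 0, c k t = 0 := by
    classical
    let S := Finset.univ.filter fun k : Fin 6 => ¬ ∀ᶠ t in 𝓝 0, c k t = 0
    have hS : S.Nonempty := ⟨n₀, by simpa [S] using hn₀⟩
    refine ⟨S.max' hS, (Finset.mem_filter.1 (S.max'_mem hS)).2, fun k hk => ?_⟩
    by_contra hcon
    exact absurd (S.le_max' k (Finset.mem_filter.2 ⟨Finset.mem_univ _, hcon⟩)) (not_le.2 hk)
  have hcj := (hc j).eventually_eq_zero_or_eventually_ne_zero.resolve_left hj
  rw [eventually_nhdsWithin_iff] at hcj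
  have hall : ∀ᶠ t in 𝓝 (0 : ℝ), (t ∈ T ∧ (t ∈ ({0} : Set ℝ)ᶜ → c j t ≠ 0)) ∧
      (∀ k, j < k → c k t = 0) ∧ (∀ i, ∑ n, c n t * r n t i = 0) ∧ ∀ k, AnalyticAt ℝ (c k) t := by
    refine (Filter.Eventually.and (hT.mem_nhds h0T) hcj).and (Filter.Eventually.and ?_ (Filter.Eventually.and ?_ ?_))
    · rw [Filter.eventually_all]
      intro k
      by_cases hk : j < k
      · filter_upwards [hjmax k hk] with t ht _ using ht
      · exact Filter.Eventually.of_forall fun t h => absurd h hk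
    · rw [Filter.eventually_all]
      exact hrel
    · rw [Filter.eventually_all]
      exact fun k => (hc k).eventually_analyticAt
  obtain ⟨B, hBsub, hB, hB0⟩ := eventually_nhds_iff.1 hall
  let P : Set ℝ := B ∩ {0}ᶜ
  have hP : IsOpen P := hB.inter isOpen_compl_singleton
  have hPT : P ⊆ T := fun t ht => (hBsub t ht.1).1.1
  have hcP : ∀ t ∈ P, c j t ≠ 0 := fun t ht => (hBsub t ht.1).1.2 ht.2
  let e : ℕ → ℝ → ℝ := fun k t => if h : k < 6 then -(c ⟨k, h⟩ t) / c j t else 0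
  have he : ∀ k, ∀ t ∈ P, AnalyticAt ℝ (e k) t := by
    intro k t ht
    by_cases h : k < 6
    · simp only [e, h, dif_pos]
      exact ((hBsub t ht.1).2.2.2 _).fun_neg.fun_div ((hBsub t ht.1).2.2.2 _) (hcP t ht)
    · simp only [e, h, dif_neg, not_false_eq_true]
      exact analyticAt_const
  have hrj : ∀ t ∈ P, ∀ i, r j t i = ∑ k ∈ Finset.range j, e k t * r k t i := by
    intro t ht i
    have h1 := (hBsub t ht.1).2.2.1 i
    have h2 := (hBsub t ht.1).2.1
    have h3 := hcP t ht
    have h4 : ∑ n : Fin 6, c n t * r n t i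
        = ∑ k ∈ Finset.range 6, (-(c j t) * e k t) * r k t i := by
      rw [Finset.sum_range]
      refine Finset.sum_congr rfl fun n _ => ?_
      simp only [e, n.2, dif_pos]
      field_simp
    rw [h4] at h1
    have h5 : ∑ k ∈ Finset.range 6, (-(c j t) * e k t) * r k t i
        = ∑ k ∈ Finset.range (j + 1), (-(c j t) * e k t) * r k t i := by
      symm
      refine Finset.sum_subset (Finset.range_subset_range.2 j.2) fun k hk hk' => ?_
      have hk6 : k < 6 := Finset.mem_range.1 hk
      have : e k t = 0 := by
        simp only [e, hk6, dif_pos]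
        rw [h2 ⟨k, hk6⟩ (by
          rw [Fin.lt_def]; simp only [Finset.mem_range] at hk'; simp; omega)]
        simp
      rw [this]; ring
    rw [h5, Finset.sum_range_succ] at h1
    have h6 : e j t = -1 := by simp [e, neg_div, h3]
    rw [h6] at h1
    simp only [mul_assoc] at h1
    rw [← Finset.mul_sum] at h1
    have h7 : c j t * (r j t i - ∑ k ∈ Finset.range j, e k t * r k t i) = 0 := by
      linear_combination h1
    have := (mul_eq_zero.1 h7).resolve_left h3
    linarith
  -- differentiating `r_n = ∑ d_k r_k` yields `r_{n+1} = ∑ (d_k' r_k + d_k r_{k+1})`, and `r_j` is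
  -- then eliminated through `hrj`
  have key : ∀ n, ∃ d : ℕ → ℝ → ℝ, (∀ k, ∀ t ∈ P, AnalyticAt ℝ (d k) t) ∧
      ∀ t ∈ P, ∀ i, r n t i = ∑ k ∈ Finset.range j, d k t * r k t i := by
    intro n
    induction n with
    | zero =>
      by_cases hj0 : (j : ℕ) = 0
      · refine ⟨fun _ _ => 0, fun _ _ _ => analyticAt_const, fun t ht i => ?_⟩
        have := hrj t ht i
        rw [hj0] at this ⊢
        simpa using this
      · refine ⟨fun k _ => if k = 0 then 1 else 0, fun _ _ _ => analyticAt_const,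
          fun t ht i => ?_⟩
        simp only [ite_mul, one_mul, zero_mul, Finset.sum_ite_eq', Finset.mem_range]
        rw [if_pos (Nat.pos_of_ne_zero hj0)]
    | succ n ih =>
      obtain ⟨d, hd, hdr⟩ := ih
      refine ⟨fun k t => deriv (d k) t + (if k = 0 then 0 else d (k - 1) t)
        + (if (j : ℕ) = 0 then 0 else d (j - 1) t) * e k t, fun k t ht => ?_, fun t ht i => ?_⟩
      · have h1 : AnalyticAt ℝ (fun t => if k = 0 then 0 else d (k - 1) t) t := by
          split_ifs
          · exact analyticAt_const
          · exact hd _ t ht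
        have h2 : AnalyticAt ℝ (fun t => if (j : ℕ) = 0 then 0 else d (j - 1) t) t := by
          split_ifs
          · exact analyticAt_const
          · exact hd _ t ht
        exact ((hd k t ht).deriv.fun_add h1).fun_add (h2.fun_mul (he k t ht))
      · have hder : deriv (fun τ => r n τ i) t
            = ∑ k ∈ Finset.range j, (deriv (d k) t * r k t i
              + d k t * deriv (fun τ => r k τ i) t) := by
          have hE : (fun τ => r n τ i) =ᶠ[𝓝 t]
              fun τ => ∑ k ∈ Finset.range j, d k τ * r k τ i := by
            filter_upwards [hP.mem_nhds ht] with τ hτ using hdr τ hτ i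
          rw [hE.deriv_eq, deriv_fun_sum fun k _ => (hd k t ht).differentiableAt.fun_mul
            (hr k i t (hPT ht)).differentiableAt]
          exact Finset.sum_congr rfl fun k _ => deriv_fun_mul (hd k t ht).differentiableAt
            (hr k i t (hPT ht)).differentiableAt
        have hstep : r (n + 1) t i = ∑ k ∈ Finset.range j, (deriv (d k) t * r k t i
            + d k t * r (k + 1) t i) := by
          rw [hrec n i t (hPT ht), hder]
          simp only [hrec _ i t (hPT ht), hdr t ht, Finset.sum_mul, mul_sub, Finset.mul_sum]
          rw [Finset.sum_comm, ← Finset.sum_sub_distrib]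
          refine Finset.sum_congr rfl fun k _ => ?_
          simp only [mul_assoc]
          ring
        rw [hstep]
        rcases Nat.eq_zero_or_eq_succ_pred (j : ℕ) with hj0 | hj1
        · simp [hj0]
        · obtain ⟨m, hm⟩ : ∃ m, (j : ℕ) = m + 1 := ⟨_, hj1⟩
          have hrj' := hrj t ht i
          simp only [Finset.sum_add_distrib, add_mul, mul_assoc, ← Finset.mul_sum]
          rw [← hrj']
          simp only [hm, Nat.add_eq_zero_iff, one_ne_zero, and_false, if_false, Nat.add_sub_cancel]
          rw [Finset.sum_range_succ (fun k => d k t * r (k + 1) t i),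
            Finset.sum_range_succ' (fun k => (if k = 0 then 0 else d (k - 1) t) * r k t i)]
          simp
          ring
  obtain ⟨d, -, hdr⟩ := key n
  have hzero : ∀ t ∈ P, ∑ i, r n t i * w t i = 0 := by
    intro t ht
    simp only [hdr t ht, Finset.sum_mul]
    rw [Finset.sum_comm]
    refine Finset.sum_eq_zero fun k hk => ?_
    have hk6 : k < 6 := (Finset.mem_range.1 hk).trans j.2
    have := hker k hk6 t (hPT ht)
    simp only [mul_assoc]
    rw [← Finset.mul_sum, this, mul_zero]
  -- the identity off the origin extends to the origin by continuity
  have hcont : ContinuousAt (fun t => ∑ i, r n t i * w t i) 0 := by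
    refine tendsto_finsetSum _ fun i _ => ?_
    exact (hr n i 0 h0T).continuousAt.mul (hw i 0 h0T).continuousAt
  refine tendsto_nhds_unique (hcont.tendsto.mono_left nhdsWithin_le_nhds) (l := 𝓝[≠] (0 : ℝ)) ?_
  refine tendsto_const_nhds.congr' ?_
  filter_upwards [inter_mem_nhdsWithin {0}ᶜ (hB.mem_nhds hB0)] with t ht
  exact (hzero t ⟨ht.2, ht.1⟩).symm

end line

/-! ### Symmetrised and directional derivatives of `V` -/

section symmetrised
variable {A0 A1 A2 A3 : ℝ × ℝ → ℝ} {q : ℝ × ℝ}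

/-- The pairing of a symmetrised derivative of `V` with a vector is, up to a nonzero factor, the
sum of the pairings of the iterated derivatives over all reorderings. -/
lemma DSym_pairing (l : List (Fin 2)) (x : Fin 6 → ℝ) :
    ∑ i, DSym A0 A1 A2 A3 l q i * x i = ((l.permutations.length : ℝ))⁻¹ *
      (l.permutations.map fun m =>
        ∑ i, DIter A0 A1 A2 A3 m (Vrow A0 A1 A2 A3) q i * x i).sum := by
  unfold DSym
  generalize l.permutations.length = N
  generalize l.permutations = L
  simp only [Pi.smul_apply, smul_eq_mul, mul_assoc, ← Finset.mul_sum]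
  congr 1
  induction L with
  | nil => simp
  | cons a L ih =>
    simp only [List.map_cons, List.sum_cons, Pi.add_apply, add_mul, Finset.sum_add_distrib, ih]

/-- A kernel vector of `M_max` is annihilated by the sum of the iterated derivatives of `V` over
all reorderings of a word of length at most five. -/
lemma sum_permutations_eq_zero {x : Fin 6 → ℝ} (hx : (Mmax A0 A1 A2 A3 q).mulVec x = 0)
    (j : Fin 6) (k : Fin (j.1 + 1)) :
    ((List.permutations' (List.replicate (k : ℕ) (1 : Fin 2) ++
        List.replicate ((j : ℕ) - (k : ℕ)) (0 : Fin 2))).map fun m =>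
      ∑ i, DIter A0 A1 A2 A3 m (Vrow A0 A1 A2 A3) q i * x i).sum = 0 := by
  have h := congrFun hx ⟨j, k⟩
  change ∑ i, DSym A0 A1 A2 A3 _ q i * x i = 0 at h
  rw [DSym_pairing] at h
  have hne : ((List.permutations (List.replicate (k : ℕ) (1 : Fin 2) ++
        List.replicate ((j : ℕ) - (k : ℕ)) (0 : Fin 2))).length : ℝ)⁻¹ ≠ 0 := by
    rw [List.length_permutations]
    positivity
  rw [← (((List.permutations_perm_permutations' _).map _).sum_eq)]
  exact (mul_eq_zero.1 h).resolve_left hne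

/-- The sum of `f` over all words of length `n`, each weighted by the product of the components
of `v` that its letters select. -/
noncomputable def wordSum (v : ℝ × ℝ) (f : List (Fin 2) → ℝ) : ℕ → ℝ
  | 0 => f []
  | n + 1 => v.1 * wordSum v (fun l => f (0 :: l)) n + v.2 * wordSum v (fun l => f (1 :: l)) n

set_option maxHeartbeats 4000000 in
/-- In `wordSum v f n`, the coefficient of `v₁^(n-k) v₂^k` is a multiple of the sum of `f` over the
reorderings of the word with `k` letters `1` and `n - k` letters `0`. -/
lemma wordSum_eq_zero (v : ℝ × ℝ) (f : List (Fin 2) → ℝ)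
    (hf : ∀ (j : Fin 6) (k : Fin (j.1 + 1)),
      ((List.permutations' (List.replicate (k : ℕ) (1 : Fin 2) ++
        List.replicate ((j : ℕ) - (k : ℕ)) (0 : Fin 2))).map f).sum = 0)
    (n : ℕ) (hn : n < 6) : wordSum v f n = 0 := by
  interval_cases n
  · have h0 := hf 0 0
    simpa [wordSum] using h0
  · have h0 := hf 1 0
    have h1 := hf 1 1
    simp [List.permutations'] at h0 h1
    simp [wordSum, h0, h1]
  · have h0 := hf 2 0
    have h1 := hf 2 1
    have h2 := hf 2 2
    simp [List.permutations', List.replicate] at h0 h1 h2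
    simp [wordSum]
    linear_combination v.1 ^ 2 * h0 + v.1 * v.2 * h1 + v.2 ^ 2 * h2
  · have h0 := hf 3 0
    have h1 := hf 3 1
    have h2 := hf 3 2
    have h3 := hf 3 3
    simp [List.permutations', List.replicate] at h0 h1 h2 h3
    simp [wordSum]
    linear_combination v.1 ^ 3 * h0 / 6 + v.1 ^ 2 * v.2 * h1 / 2 + v.1 * v.2 ^ 2 * h2 / 2
      + v.2 ^ 3 * h3 / 6
  · have h0 := hf 4 0
    have h1 := hf 4 1
    have h2 := hf 4 2
    have h3 := hf 4 3
    have h4 := hf 4 4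
    simp [List.permutations', List.replicate] at h0 h1 h2 h3 h4
    simp [wordSum]
    linear_combination v.1 ^ 4 * h0 / 24 + v.1 ^ 3 * v.2 * h1 / 6 + v.1 ^ 2 * v.2 ^ 2 * h2 / 4
      + v.1 * v.2 ^ 3 * h3 / 6 + v.2 ^ 4 * h4 / 24
  · have h0 := hf 5 0
    have h1 := hf 5 1
    have h2 := hf 5 2
    have h3 := hf 5 3
    have h4 := hf 5 4
    have h5 := hf 5 5
    simp [List.permutations', List.replicate] at h0 h1 h2 h3 h4 h5
    simp [wordSum]
    linear_combination v.1 ^ 5 * h0 / 120 + v.1 ^ 4 * v.2 * h1 / 24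
      + v.1 ^ 3 * v.2 ^ 2 * h2 / 12 + v.1 ^ 2 * v.2 ^ 3 * h3 / 12
      + v.1 * v.2 ^ 4 * h4 / 24 + v.2 ^ 5 * h5 / 120

lemma wordSum_mul (v : ℝ × ℝ) (f : List (Fin 2) → ℝ) (c : ℝ) (n : ℕ) :
    wordSum v f n * c = wordSum v (fun l => f l * c) n := by
  induction n generalizing f with
  | zero => rfl
  | succ n ih => simp only [wordSum, ← ih]; ring

lemma wordSum_sum (v : ℝ × ℝ) (f : Fin 6 → List (Fin 2) → ℝ) (n : ℕ) :
    ∑ i, wordSum v (f i) n = wordSum v (fun l => ∑ i, f i l) n := by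
  induction n generalizing f with
  | zero => rfl
  | succ n ih => simp only [wordSum, ← ih, Finset.sum_add_distrib, Finset.mul_sum]

lemma analytic_wordSum (v : ℝ × ℝ) {g : List (Fin 2) → ℝ × ℝ → ℝ}
    (hg : ∀ l, AnalyticAt ℝ (g l) q) (n : ℕ) :
    AnalyticAt ℝ (fun z => wordSum v (fun l => g l z) n) q := by
  induction n generalizing g with
  | zero => exact hg []
  | succ n ih =>
    exact (analyticAt_const.fun_mul (ih fun l => hg (0 :: l))).fun_add
      (analyticAt_const.fun_mul (ih fun l => hg (1 :: l)))

lemma pd_lin {f g : ℝ × ℝ → ℝ} (hf : DifferentiableAt ℝ f q) (hg : DifferentiableAt ℝ g q)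
    (a : Fin 2) (b c : ℝ) :
    pd a (fun z => b * f z + c * g z) q = b * pd a f q + c * pd a g q := by
  have hb : DifferentiableAt ℝ (fun _ : ℝ × ℝ => b) q := differentiableAt_const b
  have hc : DifferentiableAt ℝ (fun _ : ℝ × ℝ => c) q := differentiableAt_const c
  fin_cases a
  · change pdx (fun z => b * f z + c * g z) q = b * pdx f q + c * pdx g q
    rw [pdx_add (hb.fun_mul hf) (hc.fun_mul hg), pdx_mul hb hf, pdx_mul hc hg, pdx_const,
      pdx_const]
    ring
  · change pdy (fun z => b * f z + c * g z) q = b * pdy f q + c * pdy g q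
    rw [pdy_add (hb.fun_mul hf) (hc.fun_mul hg), pdy_mul hb hf, pdy_mul hc hg, pdy_const,
      pdy_const]
    ring

lemma Dop_wordSum (v : ℝ × ℝ) {g : List (Fin 2) → ℝ × ℝ → Fin 6 → ℝ}
    (hg : ∀ l i, AnalyticAt ℝ (fun z => g l z i) q) (a : Fin 2) (n : ℕ) (i : Fin 6) :
    Dop A0 A1 A2 A3 a (fun z i => wordSum v (fun l => g l z i) n) q i
      = wordSum v (fun l => Dop A0 A1 A2 A3 a (g l) q i) n := by
  induction n generalizing g with
  | zero => rfl
  | succ n ih =>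
    change _ = v.1 * wordSum v (fun l => Dop A0 A1 A2 A3 a (g (0 :: l)) q i) n
      + v.2 * wordSum v (fun l => Dop A0 A1 A2 A3 a (g (1 :: l)) q i) n
    rw [← ih (g := fun l => g (0 :: l)) fun l => hg (0 :: l),
      ← ih (g := fun l => g (1 :: l)) fun l => hg (1 :: l)]
    simp only [wordSum, Dop_apply]
    rw [pd_lin (analytic_wordSum v (fun l => hg (0 :: l) i) n).differentiableAt
      (analytic_wordSum v (fun l => hg (1 :: l) i) n).differentiableAt]
    simp only [Fin.sum_univ_six]
    ring

/-- The `n`-th covariant derivative of `V` in the constant direction `v`. -/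
noncomputable def rv (A0 A1 A2 A3 : ℝ × ℝ → ℝ) (v : ℝ × ℝ) (n : ℕ) : ℝ × ℝ → Fin 6 → ℝ := fun q i =>
  wordSum v (fun l => DIter A0 A1 A2 A3 l (Vrow A0 A1 A2 A3) q i) n

lemma rv_succ (h0 : AnalyticAt ℝ A0 q) (h1 : AnalyticAt ℝ A1 q)
    (h2 : AnalyticAt ℝ A2 q) (h3 : AnalyticAt ℝ A3 q) (v : ℝ × ℝ) (n : ℕ) (i : Fin 6) :
    rv A0 A1 A2 A3 v (n + 1) q i
      = v.1 * Dop A0 A1 A2 A3 0 (rv A0 A1 A2 A3 v n) q i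
        + v.2 * Dop A0 A1 A2 A3 1 (rv A0 A1 A2 A3 v n) q i := by
  unfold rv
  rw [Dop_wordSum v (analytic_DIter h0 h1 h2 h3), Dop_wordSum v (analytic_DIter h0 h1 h2 h3)]
  rfl

lemma analytic_rv (h0 : AnalyticAt ℝ A0 q) (h1 : AnalyticAt ℝ A1 q)
    (h2 : AnalyticAt ℝ A2 q) (h3 : AnalyticAt ℝ A3 q) (v : ℝ × ℝ) (n : ℕ) (i : Fin 6) :
    AnalyticAt ℝ (fun z => rv A0 A1 A2 A3 v n z i) q :=
  analytic_wordSum v (fun l => analytic_DIter h0 h1 h2 h3 l i) n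

/-- The rows of `M_max` are the polarisations of the directional derivatives of order at most five,
so a kernel vector is annihilated by the latter. -/
lemma rv_kernel {x : Fin 6 → ℝ} (hx : (Mmax A0 A1 A2 A3 q).mulVec x = 0) (v : ℝ × ℝ)
    (n : ℕ) (hn : n < 6) : ∑ i, rv A0 A1 A2 A3 v n q i * x i = 0 := by
  unfold rv
  simp only [wordSum_mul, wordSum_sum]
  exact wordSum_eq_zero v _ (sum_permutations_eq_zero hx) n hn

lemma hasDerivAt_line {f : ℝ × ℝ → ℝ} {p v : ℝ × ℝ} {t : ℝ}
    (hf : DifferentiableAt ℝ f (p + t • v)) :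
    HasDerivAt (fun τ : ℝ => f (p + τ • v))
      (v.1 * pdx f (p + t • v) + v.2 * pdy f (p + t • v)) t := by
  have h3 : HasDerivAt (fun τ : ℝ => p + τ • v) v t := by
    simpa using ((hasDerivAt_id t).smul_const v).const_add p
  have h := HasFDerivAt.comp_hasDerivAt (l := f) t hf.hasFDerivAt h3
  rw [pdx_eq_fderiv hf, pdy_eq_fderiv hf]
  have hv : v = v.1 • ((1, 0) : ℝ × ℝ) + v.2 • ((0, 1) : ℝ × ℝ) := by ext <;> simp
  have : fderiv ℝ f (p + t • v) v = v.1 * fderiv ℝ f (p + t • v) (1, 0)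
      + v.2 * fderiv ℝ f (p + t • v) (0, 1) := by
    generalize fderiv ℝ f (p + t • v) = L
    conv_lhs => rw [hv]
    rw [map_add, map_smul, map_smul]; rfl
  rw [← this]
  exact h

/-- If `W` lies in the kernel of `M_max`, then at `p` its value is annihilated by the directional
covariant derivatives of `V` of every order. -/
lemma rv_all {V : Set (ℝ × ℝ)} (hV : IsOpen V)
    (h0 : AnalyticOnNhd ℝ A0 V) (h1 : AnalyticOnNhd ℝ A1 V)
    (h2 : AnalyticOnNhd ℝ A2 V) (h3 : AnalyticOnNhd ℝ A3 V) {W : ℝ × ℝ → Fin 6 → ℝ}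
    (hW : ∀ i, AnalyticOnNhd ℝ (fun z => W z i) V)
    (hker : ∀ z ∈ V, (Mmax A0 A1 A2 A3 z).mulVec (W z) = 0) {p : ℝ × ℝ} (hp : p ∈ V)
    (hWp : W p ≠ 0) (v : ℝ × ℝ) (n : ℕ) : ∑ i, rv A0 A1 A2 A3 v n p i * W p i = 0 := by
  have hline : ∀ t, AnalyticAt ℝ (fun t : ℝ => p + t • v) t := fun t =>
    analyticAt_const.add (analyticAt_id.smul analyticAt_const)
  have hcont : Continuous fun t : ℝ => p + t • v := by fun_prop
  have h := line_kernel (T := (fun t : ℝ => p + t • v) ⁻¹' V) (hV.preimage hcont)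
    (by simpa using hp) (r := fun n t i => rv A0 A1 A2 A3 v n (p + t • v) i)
    (O := fun t k i => v.1 * Om A0 A1 A2 A3 0 (p + t • v) k i
      + v.2 * Om A0 A1 A2 A3 1 (p + t • v) k i) (w := fun t i => W (p + t • v) i)
    (fun n i t ht => AnalyticAt.fun_comp (f := fun t : ℝ => p + t • v)
      (analytic_rv (h0 _ ht) (h1 _ ht) (h2 _ ht) (h3 _ ht) v n i) (hline t))
    (fun n i t ht => ?_)
    (fun i t ht => AnalyticAt.fun_comp (f := fun t : ℝ => p + t • v) (hW i _ ht) (hline t)) (by simpa using hWp)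
    (fun n hn t ht => rv_kernel (hker _ ht) v n hn) n
  · simpa using h
  · rw [rv_succ (h0 _ ht) (h1 _ ht) (h2 _ ht) (h3 _ ht), (hasDerivAt_line
      (analytic_rv (h0 _ ht) (h1 _ ht) (h2 _ ht) (h3 _ ht) v n i).differentiableAt).deriv,
      Dop_apply, Dop_apply]
    simp only [Fin.sum_univ_six, pd, Matrix.cons_val_zero, Matrix.cons_val_one]
    ring

end symmetrised

/-! ### Radially parallel fields -/

lemma analyticAt_smul_vec {E X : Type*} [NormedAddCommGroup E] [NormedSpace ℝ E]
    [NormedAddCommGroup X] [NormedSpace ℝ X] {f : E → ℝ} {v : E} (hf : AnalyticAt ℝ f v) (x : X) :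
    AnalyticAt ℝ (fun z => f z • x) v := hf.smul analyticAt_const

section backward
variable {A0 A1 A2 A3 : ℝ × ℝ → ℝ} {p : ℝ × ℝ}

/-- The connection form `-(Ω₁ dx + Ω₂ dy)`, recentred at `p`, as an analytic operator-valued map. -/
lemma exists_connForm (h0 : AnalyticAt ℝ A0 p) (h1 : AnalyticAt ℝ A1 p)
    (h2 : AnalyticAt ℝ A2 p) (h3 : AnalyticAt ℝ A3 p) :
    ∃ A : ℝ × ℝ → ℝ × ℝ →L[ℝ] (Fin 6 → ℝ) →L[ℝ] (Fin 6 → ℝ), AnalyticAt ℝ A 0 ∧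
      ∀ v u x i, A v u x i = -∑ j, (u.1 * Om1 A0 A1 A2 A3 (p + v) i j
        + u.2 * Om2 A0 A1 A2 A3 (p + v) i j) * x j := by
  let T : Fin 6 → Fin 6 → (Fin 6 → ℝ) →L[ℝ] (Fin 6 → ℝ) := fun i j =>
    (ContinuousLinearMap.proj (R := ℝ) (φ := fun _ : Fin 6 => ℝ) j).smulRight
      (Pi.single i (-1) : Fin 6 → ℝ)
  let B1 : Fin 6 → Fin 6 → ℝ × ℝ →L[ℝ] (Fin 6 → ℝ) →L[ℝ] (Fin 6 → ℝ) := fun i j =>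
    (ContinuousLinearMap.fst ℝ ℝ ℝ).smulRight (T i j)
  let B2 : Fin 6 → Fin 6 → ℝ × ℝ →L[ℝ] (Fin 6 → ℝ) →L[ℝ] (Fin 6 → ℝ) := fun i j =>
    (ContinuousLinearMap.snd ℝ ℝ ℝ).smulRight (T i j)
  have hsh : AnalyticAt ℝ (fun v : ℝ × ℝ => p + v) 0 := analyticAt_const.add analyticAt_id
  refine ⟨fun v => ∑ i, ∑ j, (Om1 A0 A1 A2 A3 (p + v) i j • B1 i j
    + Om2 A0 A1 A2 A3 (p + v) i j • B2 i j), ?_, ?_⟩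
  · refine Finset.analyticAt_fun_sum _ fun i _ => Finset.analyticAt_fun_sum _ fun j _ => ?_
    have o1 : AnalyticAt ℝ (fun v : ℝ × ℝ => Om1 A0 A1 A2 A3 (p + v) i j) 0 :=
      AnalyticAt.fun_comp (g := fun z => Om1 A0 A1 A2 A3 z i j) (f := fun v : ℝ × ℝ => p + v)
        (by simpa using analytic_Om1 h0 h1 h2 h3 i j) hsh
    have o2 : AnalyticAt ℝ (fun v : ℝ × ℝ => Om2 A0 A1 A2 A3 (p + v) i j) 0 :=
      AnalyticAt.fun_comp (g := fun z => Om2 A0 A1 A2 A3 z i j) (f := fun v : ℝ × ℝ => p + v)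
        (by simpa using analytic_Om2 h0 h1 h2 h3 i j) hsh
    exact (analyticAt_smul_vec o1 (B1 i j)).fun_add (analyticAt_smul_vec o2 (B2 i j))
  · intro v u x i
    simp only [sum_apply, Finset.sum_apply, add_apply, smul_apply, Pi.add_apply,
      Pi.smul_apply, B1, B2, T, ContinuousLinearMap.smulRight_apply, ContinuousLinearMap.proj_apply,
      ContinuousLinearMap.coe_fst', ContinuousLinearMap.coe_snd', smul_eq_mul, Pi.single_apply]
    rw [Finset.sum_eq_single i]
    · rw [← Finset.sum_neg_distrib]
      refine Finset.sum_congr rfl fun j _ => ?_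
      simp; ring
    · intro k _ hk
      simp [hk.symm]
    · simp

/-- The analytic field with prescribed value at `p` that is covariantly constant along the rays
through `p`. -/
lemma radial_section (h0 : AnalyticAt ℝ A0 p) (h1 : AnalyticAt ℝ A1 p)
    (h2 : AnalyticAt ℝ A2 p) (h3 : AnalyticAt ℝ A3 p) (w : Fin 6 → ℝ) :
    ∃ s : ℝ × ℝ → Fin 6 → ℝ, (∀ i, AnalyticAt ℝ (fun z => s z i) p) ∧ s p = w ∧
      (∀ᶠ q in 𝓝 p, ∀ y : ℝ → Fin 6 → ℝ, y 0 = w →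
        (∀ t ∈ Set.Icc (0 : ℝ) 1, ∀ i, HasDerivAt (fun τ => y τ i)
          (-∑ j, ((q - p).1 * Om1 A0 A1 A2 A3 (p + t • (q - p)) i j
            + (q - p).2 * Om2 A0 A1 A2 A3 (p + t • (q - p)) i j) * y t j) t) → y 1 = s q) ∧
      (∀ᶠ q in 𝓝 p, ∀ i, (q - p).1 * nab pdx (Om1 A0 A1 A2 A3) s q i
        + (q - p).2 * nab pdy (Om2 A0 A1 A2 A3) s q i = 0) := by
  obtain ⟨A, hA, hAe⟩ := exists_connForm h0 h1 h2 h3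
  obtain ⟨s, hs, hs0, hU, hE⟩ := radial_ode hA w
  have htend : Filter.Tendsto (fun q : ℝ × ℝ => q - p) (𝓝 p) (𝓝 0) := by
    have : ContinuousAt (fun q : ℝ × ℝ => q - p) p := by fun_prop
    simpa [ContinuousAt] using this
  have hsp : AnalyticAt ℝ (fun z => s (z - p)) p :=
    AnalyticAt.fun_comp (f := fun z : ℝ × ℝ => z - p) (by simpa using hs)
      (analyticAt_id.sub analyticAt_const)
  have hsi : ∀ i, AnalyticAt ℝ (fun z => s (z - p) i) p := fun i =>
    ((ContinuousLinearMap.proj (R := ℝ) (φ := fun _ : Fin 6 => ℝ) i).analyticAt _).fun_comp hsp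
  refine ⟨fun z => s (z - p), hsi, by simpa using hs0, ?_, ?_⟩
  · filter_upwards [htend.eventually hU] with q hq y hy0 hy
    refine hq y hy0 fun t ht => hasDerivAt_pi.2 fun i => ?_
    rw [hAe]
    exact hy t ht i
  · filter_upwards [htend.eventually hE, htend.eventually hs.eventually_analyticAt] with q hq hsq i
    have hd : HasFDerivAt (fun z => s (z - p)) (fderiv ℝ s (q - p)) q := by
      simpa using HasFDerivAt.comp q (f := fun z : ℝ × ℝ => z - p)
        hsq.differentiableAt.hasFDerivAt ((hasFDerivAt_id q).sub_const p)
    have hdi : HasFDerivAt (fun z => s (z - p) i)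
        ((ContinuousLinearMap.proj (R := ℝ) (φ := fun _ : Fin 6 => ℝ) i).comp
          (fderiv ℝ s (q - p))) q := hasFDerivAt_pi'.1 hd i
    have hv : q - p = (q - p).1 • ((1, 0) : ℝ × ℝ) + (q - p).2 • ((0, 1) : ℝ × ℝ) := by
      ext <;> simp
    have h4 : fderiv ℝ s (q - p) (q - p) i = (q - p).1 * fderiv ℝ s (q - p) (1, 0) i
        + (q - p).2 * fderiv ℝ s (q - p) (0, 1) i := by
      generalize fderiv ℝ s (q - p) = L
      conv_lhs => rw [hv]
      rw [map_add, map_smul, map_smul]; rfl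
    rw [hq, hAe] at h4
    simp only [nab]
    rw [pdx_eq_fderiv hdi.differentiableAt, pdy_eq_fderiv hdi.differentiableAt, hdi.fderiv]
    simp only [ContinuousLinearMap.comp_apply, ContinuousLinearMap.proj_apply]
    rw [add_sub_cancel] at h4
    simp only [Fin.sum_univ_six] at h4 ⊢
    linear_combination -h4

end backward

/-! ### From radially parallel to parallel -/

/-- An analytic function of one variable all of whose derivatives vanish at `0` is zero on every
interval around `0`; `g n` is the `n`-th derivative. -/
lemma zero_of_derivs {T : Set ℝ} (hT : IsOpen T) (hTc : IsPreconnected T) (h0 : (0 : ℝ) ∈ T)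
    {g : ℕ → ℝ → ℝ} (ha : AnalyticOnNhd ℝ (g 0) T)
    (hd : ∀ n, ∀ t ∈ T, HasDerivAt (g n) (g (n + 1) t) t) (hz : ∀ n, g n 0 = 0) :
    ∀ t ∈ T, g 0 t = 0 := by
  have hi : ∀ n, ∀ t ∈ T, iteratedDeriv n (g 0) t = g n t := by
    intro n
    induction n with
    | zero => intro t _; simp
    | succ n ih =>
      intro t ht
      rw [iteratedDeriv_succ]
      have : iteratedDeriv n (g 0) =ᶠ[𝓝 t] g n := by
        filter_upwards [hT.mem_nhds ht] with τ hτ using ih τ hτ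
      rw [this.deriv_eq, (hd n t ht).deriv]
  have hps := (ha 0 h0).hasFPowerSeriesAt
  have hzero : (FormalMultilinearSeries.ofScalars ℝ
      (fun n => iteratedDeriv n (g 0) 0 / (n.factorial : ℝ)) : FormalMultilinearSeries ℝ ℝ ℝ) = 0 := by
    ext n
    simp [hi n 0 h0, hz n, FormalMultilinearSeries.ofScalars]
  rw [hzero] at hps
  exact ha.eqOn_zero_of_preconnected_of_eventuallyEq_zero hTc h0 hps.eventually_eq_zero

section
variable {A0 A1 A2 A3 : ℝ × ℝ → ℝ} {p : ℝ × ℝ}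

lemma nab_def (d : (ℝ × ℝ → ℝ) → ℝ × ℝ → ℝ) (O : ℝ × ℝ → Matrix (Fin 6) (Fin 6) ℝ)
    (s : ℝ × ℝ → Fin 6 → ℝ) (q : ℝ × ℝ) (i : Fin 6) :
    nab d O s q i = d (fun z => s z i) q + ∑ k, O q i k * s q k := rfl

lemma analytic_nab1 {q : ℝ × ℝ} (h0 : AnalyticAt ℝ A0 q) (h1 : AnalyticAt ℝ A1 q)
    (h2 : AnalyticAt ℝ A2 q) (h3 : AnalyticAt ℝ A3 q) {s : ℝ × ℝ → Fin 6 → ℝ}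
    (hs : ∀ i, AnalyticAt ℝ (fun z => s z i) q) (i : Fin 6) :
    AnalyticAt ℝ (fun z => nab pdx (Om1 A0 A1 A2 A3) s z i) q :=
  (analytic_pdx (hs i)).fun_add (Finset.analyticAt_fun_sum _ fun k _ =>
    (analytic_Om1 h0 h1 h2 h3 i k).fun_mul (hs k))

lemma analytic_nab2 {q : ℝ × ℝ} (h0 : AnalyticAt ℝ A0 q) (h1 : AnalyticAt ℝ A1 q)
    (h2 : AnalyticAt ℝ A2 q) (h3 : AnalyticAt ℝ A3 q) {s : ℝ × ℝ → Fin 6 → ℝ}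
    (hs : ∀ i, AnalyticAt ℝ (fun z => s z i) q) (i : Fin 6) :
    AnalyticAt ℝ (fun z => nab pdy (Om2 A0 A1 A2 A3) s z i) q :=
  (analytic_pdy (hs i)).fun_add (Finset.analyticAt_fun_sum _ fun k _ =>
    (analytic_Om2 h0 h1 h2 h3 i k).fun_mul (hs k))

/-- The radially parallel extension of a vector annihilated by all directional covariant
derivatives of `V` at `p` is annihilated by `V` near `p`. -/
lemma Vrow_radial {r : ℝ} (h0 : AnalyticOnNhd ℝ A0 (Metric.ball p r))
    (h1 : AnalyticOnNhd ℝ A1 (Metric.ball p r)) (h2 : AnalyticOnNhd ℝ A2 (Metric.ball p r))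
    (h3 : AnalyticOnNhd ℝ A3 (Metric.ball p r)) {s : ℝ × ℝ → Fin 6 → ℝ}
    (hs : ∀ q ∈ Metric.ball p r, ∀ i, AnalyticAt ℝ (fun z => s z i) q)
    (hE : ∀ q ∈ Metric.ball p r, ∀ i, (q - p).1 * nab pdx (Om1 A0 A1 A2 A3) s q i
        + (q - p).2 * nab pdy (Om2 A0 A1 A2 A3) s q i = 0)
    (hrv : ∀ v n, ∑ i, rv A0 A1 A2 A3 v n p i * s p i = 0) :
    ∀ q ∈ Metric.ball p r, ∑ i, Vrow A0 A1 A2 A3 q i * s q i = 0 := by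
  intro q hq
  have hp : p ∈ Metric.ball p r := Metric.mem_ball_self (dist_nonneg.trans_lt hq)
  set v := q - p with hv
  have hline : ∀ t, AnalyticAt ℝ (fun t : ℝ => p + t • v) t := fun t =>
    analyticAt_const.add (analyticAt_id.smul analyticAt_const)
  have hcont : Continuous fun t : ℝ => p + t • v := by fun_prop
  set T : Set ℝ := (fun t : ℝ => p + t • v) ⁻¹' Metric.ball p r with hTdef
  have hTo : IsOpen T := Metric.isOpen_ball.preimage hcont
  have hTc : Convex ℝ T := by
    have e : T = AffineMap.lineMap (k := ℝ) p q ⁻¹' Metric.ball p r := by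
      ext t
      simp [hTdef, AffineMap.lineMap_apply, hv, add_comm]
    rw [e]
    exact (convex_ball p r).affine_preimage _
  have hT0 : (0 : ℝ) ∈ T := by simpa [hTdef] using hp
  have hT1 : (1 : ℝ) ∈ T := by simpa [hTdef, hv] using hq
  -- covariant constancy in the direction `v` along the whole line, first away from its centre
  have hpar : ∀ i, ∀ t ∈ T, v.1 * nab pdx (Om1 A0 A1 A2 A3) s (p + t • v) i
      + v.2 * nab pdy (Om2 A0 A1 A2 A3) s (p + t • v) i = 0 := by
    intro i
    have hne : ∀ t ∈ T, t ≠ 0 → v.1 * nab pdx (Om1 A0 A1 A2 A3) s (p + t • v) i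
      + v.2 * nab pdy (Om2 A0 A1 A2 A3) s (p + t • v) i = 0 := by
      intro t ht ht0
      have := hE _ ht i
      simp only [add_sub_cancel_left, Prod.smul_fst, Prod.smul_snd, smul_eq_mul] at this
      apply mul_left_cancel₀ ht0
      linear_combination this
    intro t ht
    by_cases ht0 : t = 0
    · subst ht0
      have hc : ContinuousAt (fun t : ℝ => v.1 * nab pdx (Om1 A0 A1 A2 A3) s (p + t • v) i
          + v.2 * nab pdy (Om2 A0 A1 A2 A3) s (p + t • v) i) 0 := by
        have a1 := AnalyticAt.fun_comp (f := fun t : ℝ => p + t • v)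
          (analytic_nab1 (h0 _ ht) (h1 _ ht) (h2 _ ht) (h3 _ ht) (hs _ ht) i) (hline 0)
        have a2 := AnalyticAt.fun_comp (f := fun t : ℝ => p + t • v)
          (analytic_nab2 (h0 _ ht) (h1 _ ht) (h2 _ ht) (h3 _ ht) (hs _ ht) i) (hline 0)
        exact (a1.continuousAt.const_mul _).add (a2.continuousAt.const_mul _)
      have hl : Filter.Tendsto (fun t : ℝ => v.1 * nab pdx (Om1 A0 A1 A2 A3) s (p + t • v) i
          + v.2 * nab pdy (Om2 A0 A1 A2 A3) s (p + t • v) i) (𝓝[≠] 0) (𝓝 0) := by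
        apply tendsto_const_nhds.congr'
        filter_upwards [self_mem_nhdsWithin, mem_nhdsWithin_of_mem_nhds (hTo.mem_nhds ht)]
          with t h1 h2 using (hne t h2 h1).symm
      exact tendsto_nhds_unique (hc.tendsto.mono_left nhdsWithin_le_nhds) hl
    · exact hne t ht ht0
  have key := zero_of_derivs hTo hTc.isPreconnected hT0
    (g := fun n t => ∑ i, rv A0 A1 A2 A3 v n (p + t • v) i * s (p + t • v) i)
    (fun t ht => Finset.analyticAt_fun_sum _ fun i _ =>
      AnalyticAt.fun_comp (f := fun t : ℝ => p + t • v) (g := fun z => rv A0 A1 A2 A3 v 0 z i * s z i)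
        ((analytic_rv (h0 _ ht) (h1 _ ht) (h2 _ ht) (h3 _ ht) v 0 i).fun_mul (hs _ ht i)) (hline t))
    (fun n t ht => ?_) (fun n => by simpa using hrv v n) 1 hT1
  · have e : p + (1 : ℝ) • v = q := by simp [hv]
    simp only [e] at key
    exact key
  · have dR := fun i => (analytic_rv (h0 _ ht) (h1 _ ht) (h2 _ ht) (h3 _ ht) v n i).differentiableAt
    have dS := fun i => (hs _ ht i).differentiableAt
    have hd := hasDerivAt_line (f := fun z => ∑ i, rv A0 A1 A2 A3 v n z i * s z i) (p := p) (v := v)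
      (t := t) (DifferentiableAt.fun_sum fun i _ => (dR i).fun_mul (dS i))
    refine hd.congr_deriv ?_
    have e0 : pdx (fun z => ∑ i, rv A0 A1 A2 A3 v n z i * s z i) (p + t • v)
        = ∑ i, Dop A0 A1 A2 A3 0 (rv A0 A1 A2 A3 v n) (p + t • v) i * s (p + t • v) i
          + ∑ i, rv A0 A1 A2 A3 v n (p + t • v) i
            * nab pdx (Om1 A0 A1 A2 A3) s (p + t • v) i :=
      pd_pairing (A0 := A0) (A1 := A1) (A2 := A2) (A3 := A3) dR dS 0
    have e1 : pdy (fun z => ∑ i, rv A0 A1 A2 A3 v n z i * s z i) (p + t • v)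
        = ∑ i, Dop A0 A1 A2 A3 1 (rv A0 A1 A2 A3 v n) (p + t • v) i * s (p + t • v) i
          + ∑ i, rv A0 A1 A2 A3 v n (p + t • v) i
            * nab pdy (Om2 A0 A1 A2 A3) s (p + t • v) i :=
      pd_pairing (A0 := A0) (A1 := A1) (A2 := A2) (A3 := A3) dR dS 1
    have hp := fun i => hpar i t ht
    rw [e0, e1]
    simp only [rv_succ (h0 _ ht) (h1 _ ht) (h2 _ ht) (h3 _ ht)]
    rw [mul_add, mul_add, Finset.mul_sum, Finset.mul_sum, Finset.mul_sum, Finset.mul_sum]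
    have : ∀ a b c d e : ℝ, b + d = 0 → a + c = e → a + b + (c + d) = e := by
      intro a b c d e h h'; linarith
    apply this
    · rw [← Finset.sum_add_distrib]
      apply Finset.sum_eq_zero
      intro i _
      linear_combination rv A0 A1 A2 A3 v n (p + t • v) i * hp i
    · rw [← Finset.sum_add_distrib]
      apply Finset.sum_congr rfl
      intro i _
      ring

/-- A column field `η` with `η + x∇₁η + y∇₂η = 0` near `p`, where `(x, y) = q - p`, vanishes
near `p`: `t ↦ t η(p + t(q - p))` is parallel along each ray and vanishes at the centre. -/
lemma euler_zero (h0 : AnalyticAt ℝ A0 p) (h1 : AnalyticAt ℝ A1 p)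
    (h2 : AnalyticAt ℝ A2 p) (h3 : AnalyticAt ℝ A3 p) {η : ℝ × ℝ → Fin 6 → ℝ}
    (hη : ∀ᶠ q in 𝓝 p, ∀ i, DifferentiableAt ℝ (fun z => η z i) q)
    (hE : ∀ᶠ q in 𝓝 p, ∀ i, η q i + (q - p).1 * nab pdx (Om1 A0 A1 A2 A3) η q i
      + (q - p).2 * nab pdy (Om2 A0 A1 A2 A3) η q i = 0) :
    ∀ᶠ q in 𝓝 p, ∀ i, η q i = 0 := by
  obtain ⟨s, -, -, hU, -⟩ := radial_section h0 h1 h2 h3 0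
  obtain ⟨r, hr, hball⟩ := Metric.eventually_nhds_iff_ball.1 (hη.and hE)
  filter_upwards [hU, Metric.ball_mem_nhds p hr] with q hq hqr i
  have hzero := hq (fun _ => 0) rfl (fun t _ i => by simpa using hasDerivAt_const t (0 : ℝ))
  have hcurve := hq (fun t i => t * η (p + t • (q - p)) i) (by ext; simp) (fun t ht i => ?_)
  · rw [← hzero] at hcurve
    simpa using congrFun hcurve i
  · have hmem : p + t • (q - p) ∈ Metric.ball p r := by
      have := (convex_ball p r).add_smul_sub_mem (Metric.mem_ball_self hr) hqr ht
      exact this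
    obtain ⟨hd, he⟩ := hball _ hmem
    have hl := hasDerivAt_line (hd i)
    refine ((hasDerivAt_id t).mul hl).congr_deriv ?_
    have := he i
    simp only [nab, add_sub_cancel_left, Prod.smul_fst, Prod.smul_snd, smul_eq_mul,
      Fin.sum_univ_six] at this
    simp only [Fin.sum_univ_six, id]
    linear_combination this

/-- A radially parallel analytic column field annihilated by `V` is parallel near `p`. -/
lemma parallel_of_radial (h0 : AnalyticAt ℝ A0 p) (h1 : AnalyticAt ℝ A1 p)
    (h2 : AnalyticAt ℝ A2 p) (h3 : AnalyticAt ℝ A3 p) {s : ℝ × ℝ → Fin 6 → ℝ}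
    (hs : ∀ i, AnalyticAt ℝ (fun z => s z i) p)
    (hE : ∀ᶠ q in 𝓝 p, ∀ i, (q - p).1 * nab pdx (Om1 A0 A1 A2 A3) s q i
        + (q - p).2 * nab pdy (Om2 A0 A1 A2 A3) s q i = 0)
    (hV : ∀ᶠ q in 𝓝 p, ∑ i, Vrow A0 A1 A2 A3 q i * s q i = 0) :
    ∀ᶠ q in 𝓝 p, ∀ i, nab pdx (Om1 A0 A1 A2 A3) s q i = 0 ∧
      nab pdy (Om2 A0 A1 A2 A3) s q i = 0 := by
  have hA : ∀ᶠ q in 𝓝 p, AnalyticAt ℝ A0 q ∧ AnalyticAt ℝ A1 q ∧ AnalyticAt ℝ A2 q ∧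
      AnalyticAt ℝ A3 q ∧ ∀ i, AnalyticAt ℝ (fun z => s z i) q :=
    h0.eventually_analyticAt.and (h1.eventually_analyticAt.and (h2.eventually_analyticAt.and
      (h3.eventually_analyticAt.and (Filter.eventually_all.2 fun i =>
        (hs i).eventually_analyticAt))))
  have hx : ∀ᶠ q in 𝓝 p, ∀ i, nab pdx (Om1 A0 A1 A2 A3) (nab pdy (Om2 A0 A1 A2 A3) s) q i
      = nab pdy (Om2 A0 A1 A2 A3) (nab pdx (Om1 A0 A1 A2 A3) s) q i := by
    filter_upwards [hA, hV] with q ⟨a0, a1, a2, a3, as⟩ hVq i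
    have := nab_comm_Om a0 a1 a2 a3 (fun i => (as i).contDiffAt) i
    rw [hVq] at this
    simpa [sub_eq_zero] using this
  -- differentiate `xη₁ + yη₂ = 0`
  have hdx : ∀ᶠ q in 𝓝 p, ∀ i, nab pdx (Om1 A0 A1 A2 A3) s q i
      + (q - p).1 * pdx (fun z => nab pdx (Om1 A0 A1 A2 A3) s z i) q
      + (q - p).2 * pdx (fun z => nab pdy (Om2 A0 A1 A2 A3) s z i) q = 0 := by
    filter_upwards [hA, hE.eventually_nhds] with q ⟨a0, a1, a2, a3, as⟩ hEq i
    have d1 := (analytic_nab1 a0 a1 a2 a3 as i).differentiableAt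
    have d2 := (analytic_nab2 a0 a1 a2 a3 as i).differentiableAt
    have hz := pdx_congr (q := q) (f := fun q => (q - p).1 * nab pdx (Om1 A0 A1 A2 A3) s q i
        + (q - p).2 * nab pdy (Om2 A0 A1 A2 A3) s q i) (g := fun _ => 0)
        (hEq.mono fun z hz => hz i)
    have f1 : DifferentiableAt ℝ (fun z : ℝ × ℝ => (z - p).1) q := by fun_prop
    have f2 : DifferentiableAt ℝ (fun z : ℝ × ℝ => (z - p).2) q := by fun_prop
    rw [pdx_const, pdx_add (f1.fun_mul d1) (f2.fun_mul d2), pdx_mul f1 d1, pdx_mul f2 d2] at hz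
    have g1 : pdx (fun z : ℝ × ℝ => (z - p).1) q = 1 := by simp [pdx]
    have g2 : pdx (fun z : ℝ × ℝ => (z - p).2) q = 0 := by simp [pdx]
    rw [g1, g2] at hz
    linear_combination hz
  have hdy : ∀ᶠ q in 𝓝 p, ∀ i, nab pdy (Om2 A0 A1 A2 A3) s q i
      + (q - p).1 * pdy (fun z => nab pdx (Om1 A0 A1 A2 A3) s z i) q
      + (q - p).2 * pdy (fun z => nab pdy (Om2 A0 A1 A2 A3) s z i) q = 0 := by
    filter_upwards [hA, hE.eventually_nhds] with q ⟨a0, a1, a2, a3, as⟩ hEq i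
    have d1 := (analytic_nab1 a0 a1 a2 a3 as i).differentiableAt
    have d2 := (analytic_nab2 a0 a1 a2 a3 as i).differentiableAt
    have hz := pdy_congr (q := q) (f := fun q => (q - p).1 * nab pdx (Om1 A0 A1 A2 A3) s q i
        + (q - p).2 * nab pdy (Om2 A0 A1 A2 A3) s q i) (g := fun _ => 0)
        (hEq.mono fun z hz => hz i)
    have f1 : DifferentiableAt ℝ (fun z : ℝ × ℝ => (z - p).1) q := by fun_prop
    have f2 : DifferentiableAt ℝ (fun z : ℝ × ℝ => (z - p).2) q := by fun_prop
    rw [pdy_const, pdy_add (f1.fun_mul d1) (f2.fun_mul d2), pdy_mul f1 d1, pdy_mul f2 d2] at hz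
    have g1 : pdy (fun z : ℝ × ℝ => (z - p).1) q = 0 := by simp [pdy]
    have g2 : pdy (fun z : ℝ × ℝ => (z - p).2) q = 1 := by simp [pdy]
    rw [g1, g2] at hz
    linear_combination hz
  have z1 : ∀ᶠ q in 𝓝 p, ∀ i, nab pdx (Om1 A0 A1 A2 A3) s q i = 0 := by
    apply euler_zero h0 h1 h2 h3
    · filter_upwards [hA] with q ⟨a0, a1, a2, a3, as⟩ i
      exact (analytic_nab1 a0 a1 a2 a3 as i).differentiableAt
    · filter_upwards [hE, hx, hdx] with q hE hx hdx i
      have e : ∑ k, Om1 A0 A1 A2 A3 q i k * ((q - p).1 * nab pdx (Om1 A0 A1 A2 A3) s q k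
        + (q - p).2 * nab pdy (Om2 A0 A1 A2 A3) s q k) = 0 :=
        Finset.sum_eq_zero fun k _ => by rw [hE k, mul_zero]
      rw [← hx i, nab_def _ _ (nab pdx _ _), nab_def _ _ (nab pdy _ _)]
      simp only [Fin.sum_univ_six] at e ⊢
      linear_combination hdx i + e
  have z2 : ∀ᶠ q in 𝓝 p, ∀ i, nab pdy (Om2 A0 A1 A2 A3) s q i = 0 := by
    apply euler_zero h0 h1 h2 h3
    · filter_upwards [hA] with q ⟨a0, a1, a2, a3, as⟩ i
      exact (analytic_nab2 a0 a1 a2 a3 as i).differentiableAt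
    · filter_upwards [hE, hx, hdy] with q hE hx hdy i
      have e : ∑ k, Om2 A0 A1 A2 A3 q i k * ((q - p).1 * nab pdx (Om1 A0 A1 A2 A3) s q k
        + (q - p).2 * nab pdy (Om2 A0 A1 A2 A3) s q k) = 0 :=
        Finset.sum_eq_zero fun k _ => by rw [hE k, mul_zero]
      rw [hx i, nab_def _ _ (nab pdx _ _), nab_def _ _ (nab pdy _ _)]
      simp only [Fin.sum_univ_six] at e ⊢
      linear_combination hdy i + e
  filter_upwards [z1, z2] with q a b i using ⟨a i, b i⟩

end

/-! ### From a kernel field to a metric -/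

/-- Pointwise algebra of the substitution `(E, F, G) = k (ψ₁, ψ₂, ψ₃)` with `k = δ⁻²` and
`δ = ψ₁ψ₃ - ψ₂²`: Liouville's linear system turns into the metrisability equations. The suffixes
`x`, `y` mark partial derivatives. -/
lemma metric_algebra {A0 A1 A2 A3 a b c ax ay bx b_y cx cy k kx ky : ℝ}
    (hax : ax = (2/3) * A1 * a - 2 * A0 * b) (hcy : cy = 2 * A3 * b - (2/3) * A2 * c)
    (hay : ay + 2 * bx = (4/3) * A2 * a - (2/3) * A1 * b - 2 * A0 * c)
    (hcx : cx + 2 * b_y = 2 * A3 * a - (4/3) * A1 * c + (2/3) * A2 * b)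
    (hd : a * c - b ^ 2 ≠ 0) (hk : k ≠ 0)
    (hkx : kx * (a * c - b ^ 2) = -2 * k * (ax * c + a * cx - 2 * b * bx))
    (hky : ky * (a * c - b ^ 2) = -2 * k * (ay * c + a * cy - 2 * b * b_y)) :
    A0 = (a * k * (ay * k + a * ky) - 2 * (a * k) * (bx * k + b * kx) + b * k * (ax * k + a * kx))
        / (2 * (a * k * (c * k) - (b * k) ^ 2)) ∧
    A1 = (3 * (b * k) * (ay * k + a * ky) + c * k * (ax * k + a * kx)
          - 2 * (b * k) * (bx * k + b * kx) - 2 * (a * k) * (cx * k + c * kx))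
        / (2 * (a * k * (c * k) - (b * k) ^ 2)) ∧
    A2 = (2 * (b * k) * (b_y * k + b * ky) + 2 * (c * k) * (ay * k + a * ky)
          - 3 * (b * k) * (cx * k + c * kx) - a * k * (cy * k + c * ky))
        / (2 * (a * k * (c * k) - (b * k) ^ 2)) ∧
    A3 = (2 * (c * k) * (b_y * k + b * ky) - c * k * (cx * k + c * kx) - b * k * (cy * k + c * ky))
        / (2 * (a * k * (c * k) - (b * k) ^ 2)) := by
  have hD : 2 * (a * k * (c * k) - (b * k) ^ 2) ≠ 0 := by
    have : 2 * (a * k * (c * k) - (b * k) ^ 2) = 2 * k ^ 2 * (a * c - b ^ 2) := by ring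
    rw [this]
    positivity
  obtain rfl : ay = (4/3) * A2 * a - (2/3) * A1 * b - 2 * A0 * c - 2 * bx := by linarith
  obtain rfl : cx = 2 * A3 * a - (4/3) * A1 * c + (2/3) * A2 * b - 2 * b_y := by linarith
  subst hax hcy
  refine ⟨?_, ?_, ?_, ?_⟩ <;> rw [eq_div_iff hD] <;> apply mul_left_cancel₀ hd
  · linear_combination (-k * a ^ 2) * hky + (k * a * b) * hkx
  · linear_combination (-3 * k * a * b) * hky + (k * (a * c + 2 * b ^ 2)) * hkx
  · linear_combination (-k * (2 * b ^ 2 + a * c)) * hky + (3 * k * b * c) * hkx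
  · linear_combination (-k * b * c) * hky + (k * c ^ 2) * hkx

lemma pdx_inv {f : ℝ × ℝ → ℝ} {q : ℝ × ℝ} (hf : DifferentiableAt ℝ f q) (h : f q ≠ 0) :
    pdx (fun z => (f z)⁻¹) q = -pdx f q / f q ^ 2 := by
  have hd : DifferentiableAt ℝ (fun z => (f z)⁻¹) q := hf.inv h
  have e : (fun z => f z * (f z)⁻¹) =ᶠ[𝓝 q] fun _ => 1 := by
    filter_upwards [hf.continuousAt.eventually_ne h] with z hz using mul_inv_cancel₀ hz
  have := pdx_congr e
  rw [pdx_const, pdx_mul hf hd] at this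
  field_simp at this ⊢
  linear_combination this

lemma pdy_inv {f : ℝ × ℝ → ℝ} {q : ℝ × ℝ} (hf : DifferentiableAt ℝ f q) (h : f q ≠ 0) :
    pdy (fun z => (f z)⁻¹) q = -pdy f q / f q ^ 2 := by
  have hd : DifferentiableAt ℝ (fun z => (f z)⁻¹) q := hf.inv h
  have e : (fun z => f z * (f z)⁻¹) =ᶠ[𝓝 q] fun _ => 1 := by
    filter_upwards [hf.continuousAt.eventually_ne h] with z hz using mul_inv_cancel₀ hz
  have := pdy_congr e
  rw [pdy_const, pdy_mul hf hd] at this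
  field_simp at this ⊢
  linear_combination this

section
variable {U : Set (ℝ × ℝ)} {A0 A1 A2 A3 : ℝ × ℝ → ℝ} {p : ℝ × ℝ}

/-- A nondegenerate analytic solution of Liouville's linear system yields a metric. -/
lemma metrisable_of_liouville (hpU : U ∈ 𝓝 p) {a b c : ℝ × ℝ → ℝ} (ha : AnalyticAt ℝ a p)
    (hb : AnalyticAt ℝ b p) (hc : AnalyticAt ℝ c p) (hd : a p * c p - b p ^ 2 ≠ 0)
    (hL : ∃ N ∈ 𝓝 p, LiouvilleSystem N A0 A1 A2 A3 a b c) :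
    MetrisableNear U A0 A1 A2 A3 p := by
  obtain ⟨N, hN, hL⟩ := hL
  have hne : ∀ᶠ q in 𝓝 p, a q * c q - b q ^ 2 ≠ 0 :=
    ((ha.fun_mul hc).fun_sub (hb.fun_pow 2)).continuousAt.eventually_ne hd
  obtain ⟨V, hV, hVo, hpV⟩ := eventually_nhds_iff.1 (hne.and (ha.eventually_analyticAt.and
    (hb.eventually_analyticAt.and (hc.eventually_analyticAt.and
      ((Filter.eventually_mem_set.2 hpU).and (Filter.eventually_mem_set.2 hN))))))
  have hk : ∀ q ∈ V, AnalyticAt ℝ (fun z => ((a z * c z - b z ^ 2) ^ 2)⁻¹) q := by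
    intro q hq
    obtain ⟨h, a1, b1, c1, -⟩ := hV q hq
    exact (((a1.fun_mul c1).fun_sub (b1.fun_pow 2)).fun_pow 2).fun_inv (pow_ne_zero 2 h)
  refine ⟨V, hVo, hpV, fun q hq => (hV q hq).2.2.2.2.1,
    fun z => a z * ((a z * c z - b z ^ 2) ^ 2)⁻¹, fun z => b z * ((a z * c z - b z ^ 2) ^ 2)⁻¹,
    fun z => c z * ((a z * c z - b z ^ 2) ^ 2)⁻¹, ?_, ?_, ?_, ?_, ?_⟩
  · exact fun q hq => ((hV q hq).2.1.fun_mul (hk q hq)).contDiffAt.contDiffWithinAt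
  · exact fun q hq => ((hV q hq).2.2.1.fun_mul (hk q hq)).contDiffAt.contDiffWithinAt
  · exact fun q hq => ((hV q hq).2.2.2.1.fun_mul (hk q hq)).contDiffAt.contDiffWithinAt
  · intro q hq
    have h := (hV q hq).1
    have : a q * ((a q * c q - b q ^ 2) ^ 2)⁻¹ * (c q * ((a q * c q - b q ^ 2) ^ 2)⁻¹)
        - (b q * ((a q * c q - b q ^ 2) ^ 2)⁻¹) ^ 2
        = (a q * c q - b q ^ 2) * (((a q * c q - b q ^ 2) ^ 2)⁻¹) ^ 2 := by ring
    simp only [this]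
    positivity
  · intro q hq
    obtain ⟨h, a1, b1, c1, -, hqN⟩ := hV q hq
    have da := a1.differentiableAt
    have db := b1.differentiableAt
    have dc := c1.differentiableAt
    have dk := (hk q hq).differentiableAt
    have dd : DifferentiableAt ℝ (fun z => a z * c z - b z ^ 2) q :=
      (da.fun_mul dc).fun_sub (db.fun_pow 2)
    obtain ⟨l1, l2, l3, l4⟩ := hL q hqN
    have kx : pdx (fun z => ((a z * c z - b z ^ 2) ^ 2)⁻¹) q * (a q * c q - b q ^ 2)
        = -2 * ((a q * c q - b q ^ 2) ^ 2)⁻¹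
          * (pdx a q * c q + a q * pdx c q - 2 * b q * pdx b q) := by
      rw [pdx_inv (f := fun z => (a z * c z - b z ^ 2) ^ 2) (dd.fun_pow 2) (pow_ne_zero 2 h),
        pdx_sq dd, pdx_sub (da.fun_mul dc) (db.fun_pow 2), pdx_mul da dc, pdx_sq db]
      field_simp
    have ky : pdy (fun z => ((a z * c z - b z ^ 2) ^ 2)⁻¹) q * (a q * c q - b q ^ 2)
        = -2 * ((a q * c q - b q ^ 2) ^ 2)⁻¹
          * (pdy a q * c q + a q * pdy c q - 2 * b q * pdy b q) := by
      rw [pdy_inv (f := fun z => (a z * c z - b z ^ 2) ^ 2) (dd.fun_pow 2) (pow_ne_zero 2 h),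
        pdy_sq dd, pdy_sub (da.fun_mul dc) (db.fun_pow 2), pdy_mul da dc, pdy_sq db]
      field_simp
    rw [pdx_mul da dk, pdy_mul da dk, pdx_mul db dk, pdy_mul db dk, pdx_mul dc dk, pdy_mul dc dk]
    exact metric_algebra l1 l2 l3 l4 h (inv_ne_zero (pow_ne_zero 2 h)) kx ky

/-- A parallel section solves Liouville's linear system in its first three components. -/
lemma liouville_of_parallel {N : Set (ℝ × ℝ)} {s : ℝ × ℝ → Fin 6 → ℝ}
    (h : ∀ q ∈ N, ∀ i, nab pdx (Om1 A0 A1 A2 A3) s q i = 0 ∧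
      nab pdy (Om2 A0 A1 A2 A3) s q i = 0) :
    LiouvilleSystem N A0 A1 A2 A3 (fun z => s z 0) (fun z => s z 1) (fun z => s z 2) := by
  intro q hq
  have x0 := (h q hq 0).1
  have x1 := (h q hq 1).1
  have x2 := (h q hq 2).1
  have y0 := (h q hq 0).2
  have y1 := (h q hq 1).2
  have y2 := (h q hq 2).2
  simp [nab, Om1, Om2, Fin.sum_univ_six] at x0 x1 x2 y0 y1 y2
  refine ⟨?_, ?_, ?_, ?_⟩
  · linear_combination x0
  · linear_combination y2
  · linear_combination y0 + 2 * x1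
  · linear_combination x2 + 2 * y1

/-- A kernel field of `M_max`, nondegenerate at `p`, forces metrisability: its value at `p`
extends to a parallel section. -/
lemma metrisable_of_kernel {V : Set (ℝ × ℝ)} (hV : IsOpen V) (hp : p ∈ V) (hVU : V ⊆ U)
    (h0 : AnalyticOnNhd ℝ A0 V) (h1 : AnalyticOnNhd ℝ A1 V)
    (h2 : AnalyticOnNhd ℝ A2 V) (h3 : AnalyticOnNhd ℝ A3 V) {W : ℝ × ℝ → Fin 6 → ℝ}
    (hW : ∀ i, AnalyticOnNhd ℝ (fun z => W z i) V)
    (hker : ∀ z ∈ V, (Mmax A0 A1 A2 A3 z).mulVec (W z) = 0)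
    (hWp : W p 0 * W p 2 - (W p 1) ^ 2 ≠ 0) : MetrisableNear U A0 A1 A2 A3 p := by
  have hWne : W p ≠ 0 := fun h => hWp (by simp [h])
  obtain ⟨s, hs, hsp, -, hE⟩ := radial_section (h0 p hp) (h1 p hp) (h2 p hp) (h3 p hp) (W p)
  have hsa : ∀ᶠ q in 𝓝 p, ∀ i, AnalyticAt ℝ (fun z => s z i) q :=
    Filter.eventually_all.2 fun i => (hs i).eventually_analyticAt
  obtain ⟨r, hr, hB⟩ := Metric.eventually_nhds_iff_ball.1
    (hE.and (hsa.and (Filter.eventually_mem_set.2 (hV.mem_nhds hp))))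
  have hsub : Metric.ball p r ⊆ V := fun q hq => (hB q hq).2.2
  have hVs := Vrow_radial (h0.mono hsub) (h1.mono hsub) (h2.mono hsub) (h3.mono hsub)
    (fun q hq => (hB q hq).2.1) (fun q hq => (hB q hq).1)
    (fun v n => by rw [hsp]; exact rv_all hV h0 h1 h2 h3 hW hker hp hWne v n)
  have hpar := parallel_of_radial (h0 p hp) (h1 p hp) (h2 p hp) (h3 p hp) hs hE
    (Filter.eventually_of_mem (Metric.ball_mem_nhds p hr) hVs)
  exact metrisable_of_liouville (Filter.mem_of_superset (hV.mem_nhds hp) hVU) (hs 0) (hs 1) (hs 2)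
    (by rw [hsp]; exact hWp) ⟨_, hpar, liouville_of_parallel fun q hq => hq⟩

end

/-! ### From a metric to a kernel field -/

/-- Pointwise algebra of the substitution `(ψ₁, ψ₂, ψ₃) = r (E, F, G)` with `r = |Δ|^(-2/3)` and
`Δ = EG - F²`: the metrisability equations turn into Liouville's linear system. The suffixes
`x`, `y` mark partial derivatives. -/
lemma liouville_algebra {A0 A1 A2 A3 E F G Ex Ey Fx Fy Gx Gy r rx ry : ℝ}
    (hd : E * G - F ^ 2 ≠ 0)
    (h0 : A0 = (E * Ey - 2 * E * Fx + F * Ex) / (2 * (E * G - F ^ 2)))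
    (h1 : A1 = (3 * F * Ey + G * Ex - 2 * F * Fx - 2 * E * Gx) / (2 * (E * G - F ^ 2)))
    (h2 : A2 = (2 * F * Fy + 2 * G * Ey - 3 * F * Gx - E * Gy) / (2 * (E * G - F ^ 2)))
    (h3 : A3 = (2 * G * Fy - G * Gx - F * Gy) / (2 * (E * G - F ^ 2)))
    (hrx : rx * (E * G - F ^ 2) = -(2/3) * r * (Ex * G + E * Gx - 2 * F * Fx))
    (hry : ry * (E * G - F ^ 2) = -(2/3) * r * (Ey * G + E * Gy - 2 * F * Fy)) :
    Ex * r + E * rx = (2/3) * A1 * (E * r) - 2 * A0 * (F * r) ∧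
    Gy * r + G * ry = 2 * A3 * (F * r) - (2/3) * A2 * (G * r) ∧
    Ey * r + E * ry + 2 * (Fx * r + F * rx)
      = (4/3) * A2 * (E * r) - (2/3) * A1 * (F * r) - 2 * A0 * (G * r) ∧
    Gx * r + G * rx + 2 * (Fy * r + F * ry)
      = 2 * A3 * (E * r) - (4/3) * A1 * (G * r) + (2/3) * A2 * (F * r) := by
  have hD : 2 * (E * G - F ^ 2) ≠ 0 := mul_ne_zero two_ne_zero hd
  rw [eq_div_iff hD] at h0 h1 h2 h3
  refine ⟨?_, ?_, ?_, ?_⟩ <;> apply mul_left_cancel₀ hd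
  · linear_combination E * hrx - (1/3) * E * r * h1 + F * r * h0
  · linear_combination G * hry - F * r * h3 + (1/3) * G * r * h2
  · linear_combination E * hry + 2 * F * hrx - (2/3) * E * r * h2 + (1/3) * F * r * h1
      + G * r * h0
  · linear_combination G * hrx + 2 * F * hry - E * r * h3 + (2/3) * G * r * h1
      - (1/3) * F * r * h2

/-- The weight `r = |D|^(-2/3)`, written as `(D²)^(-1/3)`, is smooth and satisfies
`D dr = -(2/3) r dD`. -/
lemma cbrt_weight {D : ℝ × ℝ → ℝ} {q : ℝ × ℝ} (hD : ContDiffAt ℝ ∞ D q) (h : D q ≠ 0) :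
    ContDiffAt ℝ ∞ (fun z => (D z ^ 2) ^ (-(1/3) : ℝ)) q ∧ (D q ^ 2) ^ (-(1/3) : ℝ) ≠ 0 ∧
    pdx (fun z => (D z ^ 2) ^ (-(1/3) : ℝ)) q * D q
      = -(2/3) * (D q ^ 2) ^ (-(1/3) : ℝ) * pdx D q ∧
    pdy (fun z => (D z ^ 2) ^ (-(1/3) : ℝ)) q * D q
      = -(2/3) * (D q ^ 2) ^ (-(1/3) : ℝ) * pdy D q := by
  have hs : ContDiffAt ℝ ∞ (fun z => (D z ^ 2) ^ (-(1/3) : ℝ)) q :=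
    (hD.pow 2).rpow_const_of_ne (pow_ne_zero 2 h)
  have hpos : 0 < (D q ^ 2) ^ (-(1/3) : ℝ) := Real.rpow_pos_of_pos (by positivity) _
  have hDd : DifferentiableAt ℝ D q := hD.differentiableAt (by simp)
  have hsd := hs.differentiableAt (by simp)
  -- the weight `r` is characterised by `r³D² = 1`; differentiate this
  have e : (fun z => (D z ^ 2) ^ (-(1/3) : ℝ) * ((D z ^ 2) ^ (-(1/3) : ℝ)) ^ 2 * D z ^ 2)
      =ᶠ[𝓝 q] fun _ => 1 := by
    filter_upwards [hDd.continuousAt.eventually_ne h] with z hz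
    have hz2 : 0 < D z ^ 2 := by positivity
    have : (D z ^ 2) ^ (-(1/3) : ℝ) * ((D z ^ 2) ^ (-(1/3) : ℝ)) ^ 2 = (D z ^ 2)⁻¹ := by
      rw [← pow_succ', ← Real.rpow_natCast, ← Real.rpow_mul hz2.le]
      norm_num [Real.rpow_neg_one]
    rw [this, inv_mul_cancel₀ hz2.ne']
  refine ⟨hs, hpos.ne', ?_, ?_⟩
  · have := pdx_congr e
    rw [pdx_const, pdx_mul (hsd.fun_mul (hsd.fun_pow 2)) (hDd.fun_pow 2),
      pdx_mul hsd (hsd.fun_pow 2), pdx_sq hsd, pdx_sq hDd] at this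
    generalize (D q ^ 2) ^ (-(1/3) : ℝ) = r at *
    apply mul_left_cancel₀ (mul_ne_zero (pow_ne_zero 2 hpos.ne') h)
    linear_combination (1/3) * this
  · have := pdy_congr e
    rw [pdy_const, pdy_mul (hsd.fun_mul (hsd.fun_pow 2)) (hDd.fun_pow 2),
      pdy_mul hsd (hsd.fun_pow 2), pdy_sq hsd, pdy_sq hDd] at this
    generalize (D q ^ 2) ^ (-(1/3) : ℝ) = r at *
    apply mul_left_cancel₀ (mul_ne_zero (pow_ne_zero 2 hpos.ne') h)
    linear_combination (1/3) * this

section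
variable {U V : Set (ℝ × ℝ)} {A0 A1 A2 A3 : ℝ × ℝ → ℝ} {p : ℝ × ℝ}

/-- A metric yields a nondegenerate smooth solution of Liouville's linear system. -/
lemma liouville_of_metrisable (h : MetrisableNear U A0 A1 A2 A3 p) :
    ∃ V, IsOpen V ∧ p ∈ V ∧ V ⊆ U ∧ ∃ a b c : ℝ × ℝ → ℝ,
      (∀ q ∈ V, ContDiffAt ℝ ∞ a q ∧ ContDiffAt ℝ ∞ b q ∧ ContDiffAt ℝ ∞ c q ∧
        a q * c q - b q ^ 2 ≠ 0) ∧ LiouvilleSystem V A0 A1 A2 A3 a b c := by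
  obtain ⟨V, hV, hp, hVU, E, F, G, hE, hF, hG, hd, hA⟩ := h
  have sE : ∀ q ∈ V, ContDiffAt ℝ ∞ E q := fun q hq => hE.contDiffAt (hV.mem_nhds hq)
  have sF : ∀ q ∈ V, ContDiffAt ℝ ∞ F q := fun q hq => hF.contDiffAt (hV.mem_nhds hq)
  have sG : ∀ q ∈ V, ContDiffAt ℝ ∞ G q := fun q hq => hG.contDiffAt (hV.mem_nhds hq)
  have sD : ∀ q ∈ V, ContDiffAt ℝ ∞ (fun z => E z * G z - F z ^ 2) q := fun q hq =>
    ((sE q hq).mul (sG q hq)).sub ((sF q hq).pow 2)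
  refine ⟨V, hV, hp, hVU, fun z => E z * ((E z * G z - F z ^ 2) ^ 2) ^ (-(1/3) : ℝ),
    fun z => F z * ((E z * G z - F z ^ 2) ^ 2) ^ (-(1/3) : ℝ),
    fun z => G z * ((E z * G z - F z ^ 2) ^ 2) ^ (-(1/3) : ℝ), fun q hq => ?_, fun q hq => ?_⟩
  · obtain ⟨hr, hr0, -, -⟩ := cbrt_weight (sD q hq) (hd q hq)
    refine ⟨(sE q hq).mul hr, (sF q hq).mul hr, (sG q hq).mul hr, ?_⟩
    simp only
    generalize ((E q * G q - F q ^ 2) ^ 2) ^ (-(1/3) : ℝ) = r at hr0 ⊢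
    have e : E q * r * (G q * r) - (F q * r) ^ 2 = (E q * G q - F q ^ 2) * r ^ 2 := by ring
    rw [e]
    exact mul_ne_zero (hd q hq) (pow_ne_zero 2 hr0)
  · obtain ⟨hr, hr0, hrx, hry⟩ := cbrt_weight (sD q hq) (hd q hq)
    have dr := hr.differentiableAt (by simp)
    have dE := (sE q hq).differentiableAt (by simp)
    have dF := (sF q hq).differentiableAt (by simp)
    have dG := (sG q hq).differentiableAt (by simp)
    rw [pdx_sub (dE.fun_mul dG) (dF.fun_pow 2), pdx_mul dE dG, pdx_sq dF] at hrx
    rw [pdy_sub (dE.fun_mul dG) (dF.fun_pow 2), pdy_mul dE dG, pdy_sq dF] at hry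
    obtain ⟨a0, a1, a2, a3⟩ := hA q hq
    rw [pdx_mul dE dr, pdy_mul dE dr, pdx_mul dF dr, pdy_mul dF dr, pdx_mul dG dr, pdy_mul dG dr]
    exact liouville_algebra (hd q hq) a0 a1 a2 a3 hrx hry

lemma pdx_zero_on {f : ℝ × ℝ → ℝ} (hV : IsOpen V) (h : ∀ q ∈ V, f q = 0) {q : ℝ × ℝ}
    (hq : q ∈ V) : pdx f q = 0 :=
  (pdx_congr (Filter.eventually_of_mem (hV.mem_nhds hq) h)).trans (pdx_const 0)

lemma pdy_zero_on {f : ℝ × ℝ → ℝ} (hV : IsOpen V) (h : ∀ q ∈ V, f q = 0) {q : ℝ × ℝ}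
    (hq : q ∈ V) : pdy f q = 0 :=
  (pdy_congr (Filter.eventually_of_mem (hV.mem_nhds hq) h)).trans (pdy_const 0)

/-- Prolongation: a smooth solution of Liouville's linear system gives a parallel section. Its
last three components are `2∂ₓψ₂`, `2∂_yψ₂` and `2∂ₓ∂_yψ₂`; the equations for these follow from
those for the first three by comparing the two orders of covariant differentiation. -/
lemma prolongation (hV : IsOpen V) (h0 : AnalyticOnNhd ℝ A0 V) (h1 : AnalyticOnNhd ℝ A1 V)
    (h2 : AnalyticOnNhd ℝ A2 V) (h3 : AnalyticOnNhd ℝ A3 V) {a b c : ℝ × ℝ → ℝ}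
    (hs : ∀ q ∈ V, ContDiffAt ℝ ∞ a q ∧ ContDiffAt ℝ ∞ b q ∧ ContDiffAt ℝ ∞ c q)
    (hL : LiouvilleSystem V A0 A1 A2 A3 a b c) :
    ∃ s : ℝ × ℝ → Fin 6 → ℝ, (∀ q, s q 0 = a q ∧ s q 1 = b q ∧ s q 2 = c q) ∧
      (∀ q ∈ V, ∀ i, ContDiffAt ℝ ∞ (fun z => s z i) q) ∧
      (∀ q ∈ V, ∀ i, nab pdx (Om1 A0 A1 A2 A3) s q i = 0) ∧
      (∀ q ∈ V, ∀ i, nab pdy (Om2 A0 A1 A2 A3) s q i = 0) ∧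
      ∀ q ∈ V, ∑ i, Vrow A0 A1 A2 A3 q i * s q i = 0 := by
  set s : ℝ × ℝ → Fin 6 → ℝ := fun z =>
    ![a z, b z, c z, 2 * pdx b z, 2 * pdy b z, 2 * pdx (pdy b) z] with hsdef
  have ss : ∀ q ∈ V, ∀ i, ContDiffAt ℝ ∞ (fun z => s z i) q := by
    intro q hq i
    obtain ⟨sa, sb, sc⟩ := hs q hq
    fin_cases i
    · exact sa
    · exact sb
    · exact sc
    · exact contDiffAt_const.mul (smooth_pdx sb)
    · exact contDiffAt_const.mul (smooth_pdy sb)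
    · exact contDiffAt_const.mul (smooth_pdx (smooth_pdy sb))
  have hcomm := fun q hq => nab_comm_Om (h0 q hq) (h1 q hq) (h2 q hq) (h3 q hq) (ss q hq)
  have p0 : (fun z => s z 0) = a := rfl
  have p1 : (fun z => s z 1) = b := rfl
  have p2 : (fun z => s z 2) = c := rfl
  have p3 : (fun z => s z 3) = fun z => 2 * pdx b z := rfl
  have p4 : (fun z => s z 4) = fun z => 2 * pdy b z := rfl
  have x0 : ∀ q ∈ V, nab pdx (Om1 A0 A1 A2 A3) s q 0 = 0 := by
    intro q hq
    rw [nab_def, p0, (hL q hq).1]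
    simp [Om1, Fin.sum_univ_six, hsdef]
  have x1 : ∀ q ∈ V, nab pdx (Om1 A0 A1 A2 A3) s q 1 = 0 := by
    intro q hq
    rw [nab_def, p1]
    simp [Om1, Fin.sum_univ_six, hsdef]
  have x2 : ∀ q ∈ V, nab pdx (Om1 A0 A1 A2 A3) s q 2 = 0 := by
    intro q hq
    rw [nab_def, p2]
    simp [Om1, Fin.sum_univ_six, hsdef]
    linear_combination (hL q hq).2.2.2
  have y0 : ∀ q ∈ V, nab pdy (Om2 A0 A1 A2 A3) s q 0 = 0 := by
    intro q hq
    rw [nab_def, p0]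
    simp [Om2, Fin.sum_univ_six, hsdef]
    linear_combination (hL q hq).2.2.1
  have y1 : ∀ q ∈ V, nab pdy (Om2 A0 A1 A2 A3) s q 1 = 0 := by
    intro q hq
    rw [nab_def, p1]
    simp [Om2, Fin.sum_univ_six, hsdef]
  have y2 : ∀ q ∈ V, nab pdy (Om2 A0 A1 A2 A3) s q 2 = 0 := by
    intro q hq
    rw [nab_def, p2, (hL q hq).2.1]
    simp [Om2, Fin.sum_univ_six, hsdef]
  have x4 : ∀ q ∈ V, nab pdx (Om1 A0 A1 A2 A3) s q 4 = 0 := by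
    intro q hq
    rw [nab_def, p4, pdx_mul (by fun_prop)
      ((smooth_pdy (hs q hq).2.1).differentiableAt (by simp)), pdx_const]
    simp [Om1, Fin.sum_univ_six, hsdef]
  have y3 : ∀ q ∈ V, nab pdy (Om2 A0 A1 A2 A3) s q 3 = 0 := by
    intro q hq
    rw [nab_def, p3, pdy_mul (by fun_prop)
      ((smooth_pdx (hs q hq).2.1).differentiableAt (by simp)), pdy_const, pdy_pdx (hs q hq).2.1]
    simp [Om2, Fin.sum_univ_six, hsdef]
  have x3 : ∀ q ∈ V, nab pdx (Om1 A0 A1 A2 A3) s q 3 = 0 := by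
    intro q hq
    have h := hcomm q hq 0
    rw [nab_def _ _ (nab pdx _ _), nab_def _ _ (nab pdy _ _), pdx_zero_on hV y0 hq,
      pdy_zero_on hV x0 hq, Fin.sum_univ_six, Fin.sum_univ_six, x0 q hq, x1 q hq, x2 q hq,
      x4 q hq, y0 q hq, y1 q hq, y2 q hq, y3 q hq] at h
    simpa [Om1, Om2] using h
  have y4 : ∀ q ∈ V, nab pdy (Om2 A0 A1 A2 A3) s q 4 = 0 := by
    intro q hq
    have h := hcomm q hq 2
    rw [nab_def _ _ (nab pdx _ _), nab_def _ _ (nab pdy _ _), pdx_zero_on hV y2 hq,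
      pdy_zero_on hV x2 hq, Fin.sum_univ_six, Fin.sum_univ_six, x0 q hq, x1 q hq, x2 q hq,
      x3 q hq, x4 q hq, y0 q hq, y1 q hq, y2 q hq, y3 q hq] at h
    simpa [Om1, Om2] using h
  have x5 : ∀ q ∈ V, nab pdx (Om1 A0 A1 A2 A3) s q 5 = 0 := by
    intro q hq
    have h := hcomm q hq 3
    rw [nab_def _ _ (nab pdx _ _), nab_def _ _ (nab pdy _ _), pdx_zero_on hV y3 hq,
      pdy_zero_on hV x3 hq, Fin.sum_univ_six, Fin.sum_univ_six, x0 q hq, x1 q hq, x2 q hq,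
      x3 q hq, x4 q hq, y0 q hq, y1 q hq, y2 q hq, y3 q hq, y4 q hq] at h
    simpa [Om1, Om2] using h
  have y5 : ∀ q ∈ V, nab pdy (Om2 A0 A1 A2 A3) s q 5 = 0 := by
    intro q hq
    have h := hcomm q hq 4
    rw [nab_def _ _ (nab pdx _ _), nab_def _ _ (nab pdy _ _), pdx_zero_on hV y4 hq,
      pdy_zero_on hV x4 hq, Fin.sum_univ_six, Fin.sum_univ_six, x0 q hq, x1 q hq, x2 q hq,
      x3 q hq, x4 q hq, x5 q hq, y0 q hq, y1 q hq, y2 q hq, y3 q hq, y4 q hq] at h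
    simpa [Om1, Om2] using h
  refine ⟨s, fun q => ⟨rfl, rfl, rfl⟩, ss, ?_, ?_, ?_⟩
  · intro q hq i
    fin_cases i
    exacts [x0 q hq, x1 q hq, x2 q hq, x3 q hq, x4 q hq, x5 q hq]
  · intro q hq i
    fin_cases i
    exacts [y0 q hq, y1 q hq, y2 q hq, y3 q hq, y4 q hq, y5 q hq]
  · intro q hq
    have h := hcomm q hq 5
    rw [nab_def _ _ (nab pdx _ _), nab_def _ _ (nab pdy _ _), pdx_zero_on hV y5 hq,
      pdy_zero_on hV x5 hq, Fin.sum_univ_six, Fin.sum_univ_six, x0 q hq, x1 q hq, x2 q hq,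
      x3 q hq, x4 q hq, x5 q hq, y0 q hq, y1 q hq, y2 q hq, y3 q hq, y4 q hq, y5 q hq,
      if_pos rfl] at h
    simpa using h.symm

/-- A smooth parallel section is analytic, because it agrees with the radially parallel extension
of its value at `p`. -/
lemma analytic_of_parallel (hV : IsOpen V) (hp : p ∈ V) (h0 : AnalyticAt ℝ A0 p)
    (h1 : AnalyticAt ℝ A1 p) (h2 : AnalyticAt ℝ A2 p) (h3 : AnalyticAt ℝ A3 p)
    {s : ℝ × ℝ → Fin 6 → ℝ} (hs : ∀ q ∈ V, ∀ i, DifferentiableAt ℝ (fun z => s z i) q)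
    (hx : ∀ q ∈ V, ∀ i, nab pdx (Om1 A0 A1 A2 A3) s q i = 0)
    (hy : ∀ q ∈ V, ∀ i, nab pdy (Om2 A0 A1 A2 A3) s q i = 0) (i : Fin 6) :
    AnalyticAt ℝ (fun z => s z i) p := by
  obtain ⟨σ, hσ, -, hU, -⟩ := radial_section h0 h1 h2 h3 (s p)
  refine (hσ i).congr ?_
  obtain ⟨r, hr, hB⟩ := Metric.isOpen_iff.1 hV p hp
  filter_upwards [hU, Metric.ball_mem_nhds p hr] with q hq hqr
  have := hq (fun t => s (p + t • (q - p))) (by simp) (fun t ht j => ?_)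
  · simp only [one_smul, add_sub_cancel] at this
    rw [this]
  · have hm : p + t • (q - p) ∈ V :=
      hB ((convex_ball p r).add_smul_sub_mem (Metric.mem_ball_self hr) hqr ht)
    refine (hasDerivAt_line (hs _ hm j)).congr_deriv ?_
    have e1 := hx _ hm j
    have e2 := hy _ hm j
    simp only [nab, Fin.sum_univ_six] at e1 e2 ⊢
    linear_combination (q - p).1 * e1 + (q - p).2 * e2

/-- A metric yields an analytic kernel field of `M_max`, nondegenerate at every point. -/
lemma kernel_of_metrisable (h0 : AnalyticOnNhd ℝ A0 U) (h1 : AnalyticOnNhd ℝ A1 U)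
    (h2 : AnalyticOnNhd ℝ A2 U) (h3 : AnalyticOnNhd ℝ A3 U)
    (h : MetrisableNear U A0 A1 A2 A3 p) :
    ∃ V : Set (ℝ × ℝ), IsOpen V ∧ p ∈ V ∧ V ⊆ U ∧
      ∃ W : ℝ × ℝ → Fin 6 → ℝ,
        (∀ i : Fin 6, AnalyticOnNhd ℝ (fun q => W q i) V) ∧
        (∀ q ∈ V, (Mmax A0 A1 A2 A3 q).mulVec (W q) = 0) ∧
        ∀ q ∈ V, W q 0 * W q 2 - (W q 1) ^ 2 ≠ 0 := by
  obtain ⟨V, hV, hp, hVU, a, b, c, hs, hL⟩ := liouville_of_metrisable h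
  obtain ⟨s, hsabc, ss, hx, hy, hVs⟩ := prolongation hV (h0.mono hVU) (h1.mono hVU) (h2.mono hVU)
    (h3.mono hVU) (fun q hq => ⟨(hs q hq).1, (hs q hq).2.1, (hs q hq).2.2.1⟩) hL
  have sd : ∀ q ∈ V, ∀ i, DifferentiableAt ℝ (fun z => s z i) q :=
    fun q hq i => (ss q hq i).differentiableAt (by simp)
  refine ⟨V, hV, hp, hVU, s, fun i q hq => analytic_of_parallel hV hq (h0 q (hVU hq))
    (h1 q (hVU hq)) (h2 q (hVU hq)) (h3 q (hVU hq)) sd hx hy i, fun q hq => ?_, fun q hq => ?_⟩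
  · funext jk
    change ∑ i, DSym A0 A1 A2 A3 _ q i * s q i = 0
    rw [DSym_pairing]
    have hI := fun l => DIter_parallel hV (h0.mono hVU) (h1.mono hVU) (h2.mono hVU)
      (h3.mono hVU) sd (fun q hq a => by
        fin_cases a
        · exact hx q hq
        · exact hy q hq) hVs l q hq
    simp [hI]
  · rw [(hsabc q).1, (hsabc q).2.1, (hsabc q).2.2]
    exact (hs q hq).2.2.2

end

lemma rank_lt_of_kernel {m : Type*} [Fintype m] (M : Matrix m (Fin 6) ℝ) {w : Fin 6 → ℝ}
    (hw : w ≠ 0) (h : M.mulVec w = 0) : M.rank < 6 := by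
  have hk : M.mulVecLin.ker ≠ ⊥ := fun hb => hw (by
    have : w ∈ M.mulVecLin.ker := by simpa using h
    rw [hb] at this
    simpa using this)
  have hpos : 0 < Module.finrank ℝ M.mulVecLin.ker :=
    Nat.pos_of_ne_zero fun h0 => hk (Submodule.finrank_eq_zero.1 h0)
  have := M.mulVecLin.finrank_range_add_finrank_ker
  simp only [Module.finrank_fin_fun] at this
  unfold Matrix.rank
  omega

end MetrisableAux

/-- **Complete local characterisation of metrisability.** A real-analytic projective
structure is metrisable near `p` iff `M_max` has rank `< 6` near `p` and there is a
real-analytic kernel field `W` of `M_max` with `W₁W₃ − W₂² ≠ 0` at `p`. -/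
theorem metrisable_iff_Mmax (U : Set (ℝ × ℝ)) (hU : IsOpen U) (hUconn : IsConnected U)
    (A0 A1 A2 A3 : ℝ × ℝ → ℝ)
    (hA0 : AnalyticOnNhd ℝ A0 U) (hA1 : AnalyticOnNhd ℝ A1 U)
    (hA2 : AnalyticOnNhd ℝ A2 U) (hA3 : AnalyticOnNhd ℝ A3 U)
    (p : ℝ × ℝ) (hp : p ∈ U) :
    MetrisableNear U A0 A1 A2 A3 p ↔
      ∃ V : Set (ℝ × ℝ), IsOpen V ∧ p ∈ V ∧ V ⊆ U ∧
        (∀ q ∈ V, (Mmax A0 A1 A2 A3 q).rank < 6) ∧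
        ∃ W : ℝ × ℝ → Fin 6 → ℝ,
          (∀ i : Fin 6, AnalyticOnNhd ℝ (fun q => W q i) V) ∧
          (∀ q ∈ V, (Mmax A0 A1 A2 A3 q).mulVec (W q) = 0) ∧
          W p 0 * W p 2 - (W p 1) ^ 2 ≠ 0 := by
  constructor
  · intro h
    obtain ⟨V, hV, hpV, hVU, W, hW, hker, hne⟩ :=
      MetrisableAux.kernel_of_metrisable hA0 hA1 hA2 hA3 h
    exact ⟨V, hV, hpV, hVU, fun q hq => MetrisableAux.rank_lt_of_kernel _
      (fun h0 => hne q hq (by simp [h0])) (hker q hq), W, hW, hker, hne p hpV⟩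
  · rintro ⟨V, hV, hpV, hVU, -, W, hW, hker, hWp⟩
    exact MetrisableAux.metrisable_of_kernel hV hpV hVU (hA0.mono hVU) (hA1.mono hVU)
      (hA2.mono hVU) (hA3.mono hVU) hW hker hWp
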